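/- arXiv:1210.4340 — 5 statements merged into one kernel-verified Lean document; each statement's English description precedes it below -/
import Mathlib

section
/- Let H ⊆ ℝ be a set such that: (1) x, y ∈ H implies x + y ∈ H; (2) there exists x ∈ H with x > 0; (3) there exists x ∈ H with x < 0. Then either H is a cyclic subgroup of (ℝ, +) (i.e. H = {n·a : n ∈ ℤ} for some a ∈ ℝ), or H is dense in ℝ. -/
theorem aux_mul (H : Set ℝ) (hadd : ∀ x ∈ H, ∀ y ∈ H, x + y ∈ H) (x : ℝ) (hx : x ∈ H) (n : ℕ) :
    ((n + 1 : ℕ) : ℝ) * x ∈ H := by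
  induction n with
  | zero => simpa using hx
  | succ k ih =>
    have := hadd _ ih _ hx
    convert this using 1
    push_cast; ring

theorem aux_mul_int (H : Set ℝ) (hadd : ∀ x ∈ H, ∀ y ∈ H, x + y ∈ H) (x : ℝ) (hx : x ∈ H) (n : ℤ)
    (hn : 0 < n) : (n : ℝ) * x ∈ H := by
  have := aux_mul H hadd x hx (n - 1).toNat
  have h2 : (((n - 1).toNat + 1 : ℕ) : ℤ) = n := by omega
  have h3 : (((n - 1).toNat + 1 : ℕ) : ℝ) = (n : ℝ) := by exact_mod_cast congrArg (Int.cast : ℤ → ℝ) h2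
  rwa [h3] at this

theorem aux_neg (H : Set ℝ) (hadd : ∀ x ∈ H, ∀ y ∈ H, x + y ∈ H) (x y : ℝ) (hx : x ∈ H)
    (hy : y ∈ H) (hxy : x * y < 0) : -x ∈ closure H := by
  rw [Metric.mem_closure_iff]
  intro ε hε
  have hy0 : y ≠ 0 := by rintro rfl; simp at hxy
  have hya : 0 < |y| := abs_pos.mpr hy0
  have ht : 0 < -x / y := by
    have : -x / y = (-(x * y)) / (y * y) := by field_simp
    rw [this]
    exact div_pos (by linarith) (mul_self_pos.mpr hy0)
  set t := -x / y with htdef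
  have hty : t * y = -x := by rw [htdef]; field_simp
  obtain ⟨N, hN⟩ := exists_nat_one_div_lt (lt_min ht (div_pos hε hya))
  have hN1 := lt_of_lt_of_le hN (min_le_left _ _)
  have hN2 := lt_of_lt_of_le hN (min_le_right _ _)
  obtain ⟨j, k, hk0, -, hjk⟩ := Real.exists_int_int_abs_mul_sub_le t (n := N + 1) (by omega)
  have hle : (1 : ℝ) / (((N + 1 : ℕ) : ℝ) + 1) ≤ 1 / ((N : ℝ) + 1) := by
    apply one_div_le_one_div_of_le (by positivity)
    push_cast; linarith
  have hjk' := hjk.trans hle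
  have hk1 : (1 : ℝ) ≤ k := by exact_mod_cast hk0
  have hj : 0 < j := by
    have h1 := (abs_le.mp hjk').2
    have : (0 : ℝ) < j := by nlinarith
    exact_mod_cast this
  have hjH := aux_mul_int H hadd y hy j hj
  have hdist : |(k : ℝ) * t - j| * |y| < ε := by
    have := lt_of_le_of_lt hjk' hN2
    rwa [lt_div_iff₀ hya] at this
  have key : dist (-x) (((k : ℝ) - 1) * x + j * y) < ε := by
    rw [Real.dist_eq]
    rw [← abs_mul] at hdist
    have : -x - (((k : ℝ) - 1) * x + j * y) = ((k : ℝ) * t - j) * y := by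
      linear_combination (-(k : ℝ)) * hty
    rwa [this]
  refine ⟨_, ?_, key⟩
  rcases (show k = 1 ∨ 0 < k - 1 by omega) with h | h
  · subst h; simpa using hjH
  · have := aux_mul_int H hadd x hx (k - 1) h
    push_cast at this
    exact hadd _ this _ hjH

theorem stmt_2 (H : Set ℝ)
    (hadd : ∀ x ∈ H, ∀ y ∈ H, x + y ∈ H)
    (hpos : ∃ x ∈ H, 0 < x)
    (hneg : ∃ x ∈ H, x < 0) :
    (∃ a : ℝ, H = {x : ℝ | ∃ m : ℤ, x = m * a}) ∨ Dense H := by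
  obtain ⟨p, hpH, hp⟩ := hpos
  obtain ⟨q, hqH, hq⟩ := hneg
  have hCadd : ∀ x ∈ closure H, ∀ y ∈ closure H, x + y ∈ closure H := fun x hx y hy =>
    map_mem_closure₂ continuous_add hx hy hadd
  have hpC := aux_neg H hadd p q hpH hqH (mul_neg_of_pos_of_neg hp hq)
  have h0 : (0 : ℝ) ∈ closure H := by
    simpa using hCadd _ (subset_closure hpH) _ hpC
  have hnegH : ∀ x ∈ H, -x ∈ closure H := by
    intro x hx
    rcases lt_trichotomy x 0 with h | h | h
    · exact aux_neg H hadd x p hx hpH (mul_neg_of_neg_of_pos h hp)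
    · subst h; simpa using h0
    · exact aux_neg H hadd x q hx hqH (mul_neg_of_pos_of_neg h hq)
  have hCneg : ∀ x ∈ closure H, -x ∈ closure H := by
    intro x hx
    have := map_mem_closure continuous_neg hx hnegH
    rwa [closure_closure] at this
  let C : AddSubgroup ℝ :=
    { carrier := closure H
      add_mem' := fun {a b} ha hb => hCadd a ha b hb
      zero_mem' := h0
      neg_mem' := fun {a} ha => hCneg a ha }
  rcases AddSubgroup.dense_or_cyclic C with h | ⟨a, ha⟩
  · right
    exact dense_closure.mp h
  · left
    have hmem : ∀ x, x ∈ closure H ↔ ∃ m : ℤ, (m : ℝ) * a = x := by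
      intro x
      change x ∈ C ↔ _
      rw [ha, AddSubgroup.mem_closure_singleton]
      simp
    have ha0 : a ≠ 0 := by
      rintro rfl
      obtain ⟨m, hm⟩ := (hmem p).1 (subset_closure hpH)
      simp at hm
      linarith
    refine ⟨a, ?_⟩
    ext x
    constructor
    · intro hx
      obtain ⟨m, hm⟩ := (hmem x).1 (subset_closure hx)
      exact ⟨m, hm.symm⟩
    · rintro ⟨m, rfl⟩
      have hx := (hmem _).2 ⟨m, rfl⟩
      obtain ⟨h, hhH, hd⟩ := Metric.mem_closure_iff.1 hx |a| (abs_pos.mpr ha0)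
      obtain ⟨n, rfl⟩ := (hmem h).1 (subset_closure hhH)
      rw [Real.dist_eq, ← sub_mul, abs_mul] at hd
      have h1 : |(m : ℝ) - n| < 1 := by
        have := abs_pos.mpr ha0
        by_contra hc
        push Not at hc
        nlinarith
      have h2 : |m - n| < 1 := by exact_mod_cast h1
      have h3 : m = n := by have := Int.abs_lt_one_iff.1 h2; omega
      rwa [h3]
end

section
/- Let ℓ₁, ℓ₂, ℓ₃ : ℝⁿ → ℝ be affine functions, ℓ_i(x) = ⟨x, a_i⟩ + c_i with a_i ∈ ℝⁿ, c_i ∈ ℝ, and assume ℓ₁ and ℓ₂ are not parallel, i.e. a₁ ≠ a₂. Then the points p_i = (a_i, c_i) ∈ ℝ^{n+1} (i = 1, 2, 3) are collinear (there exists λ ∈ ℝ with p₃ = λ·p₁ + (1−λ)·p₂) if and only if for every x₀ ∈ ℝⁿ, ℓ₁(x₀) = ℓ₂(x₀) implies ℓ₃(x₀) = ℓ₁(x₀). -/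
open scoped RealInnerProductSpace

theorem stmt_3 {n : ℕ} (a₁ a₂ a₃ : EuclideanSpace ℝ (Fin n)) (c₁ c₂ c₃ : ℝ)
    (hpar : a₁ ≠ a₂) :
    (∃ l : ℝ, a₃ = l • a₁ + (1 - l) • a₂ ∧ c₃ = l * c₁ + (1 - l) * c₂) ↔
      (∀ x₀ : EuclideanSpace ℝ (Fin n),
        ⟪x₀, a₁⟫ + c₁ = ⟪x₀, a₂⟫ + c₂ → ⟪x₀, a₃⟫ + c₃ = ⟪x₀, a₁⟫ + c₁) := by
  constructor
  · rintro ⟨l, rfl, rfl⟩ x hx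
    simp only [inner_add_right, inner_smul_right]
    linear_combination (l - 1) * hx
  · intro h
    obtain ⟨d, rfl⟩ : ∃ d, a₁ = a₂ + d := ⟨a₁ - a₂, by abel⟩
    have hd : d ≠ 0 := by
      rintro rfl
      simp at hpar
    have hD : ⟪d, d⟫ ≠ 0 := inner_self_ne_zero.mpr hd
    obtain ⟨e, rfl⟩ : ∃ e, a₃ = a₂ + e := ⟨a₃ - a₂, by abel⟩
    have key : ∀ x : EuclideanSpace ℝ (Fin n), ⟪x, d⟫ = c₂ - c₁ → ⟪x, e⟫ = c₂ - c₃ := by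
      intro x hx
      have := h x (by rw [inner_add_right]; linarith)
      simp only [inner_add_right] at this
      linarith
    obtain ⟨l, hl⟩ : ∃ l : ℝ, l * ⟪d, d⟫ = ⟪d, e⟫ := ⟨⟪d, e⟫ / ⟪d, d⟫, by field_simp⟩
    obtain ⟨m, hm⟩ : ∃ m : ℝ, m * ⟪d, d⟫ = c₂ - c₁ := ⟨(c₂ - c₁) / ⟪d, d⟫, by field_simp⟩
    have hwd : ⟪e - l • d, d⟫ = 0 := by
      rw [inner_sub_left, real_inner_smul_left, hl, real_inner_comm, sub_self]
    have h1 := key (m • d) (by rw [real_inner_smul_left, hm])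
    have h2 := key (m • d + (e - l • d)) (by
      rw [inner_add_left, real_inner_smul_left, hm, hwd, add_zero])
    rw [inner_add_left, h1] at h2
    have hw : e - l • d = 0 := by
      rw [← inner_self_eq_zero (𝕜 := ℝ), inner_sub_right, real_inner_smul_right, hwd]
      linarith
    rw [sub_eq_zero] at hw
    refine ⟨l, ?_, ?_⟩
    · rw [hw]; module
    · rw [real_inner_smul_left, ← hl] at h1
      linear_combination h1 - l * hm
end

section
/- Let n ≥ 1 and suppose T : Cvx(ℝⁿ) → Cvx(ℝⁿ) satisfies: (1) for all φ, ψ ∈ Cvx(ℝⁿ), φ ≤ ψ pointwise if and only if Tφ ≤ Tψ pointwise; (2) Tφ = φ for every positively homogeneous φ ∈ Cvx(ℝⁿ). Then for every a ∈ ℝⁿ and every c < 0, there exists c' < 0 such that T(x ↦ ⟨x,a⟩ + c) is the function x ↦ ⟨x,a⟩ + c'. -/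
open scoped RealInnerProductSpace

noncomputable section

/-- `Cvx(ℝⁿ)`: convex, lower semicontinuous functions `ℝⁿ → (-∞, ∞]`
that are finite at at least one point. -/
def CvxFns (n : ℕ) : Set (EuclideanSpace ℝ (Fin n) → EReal) :=
  {φ | (∀ x, φ x ≠ ⊥) ∧
    (∀ x y : EuclideanSpace ℝ (Fin n), ∀ l : ℝ, 0 ≤ l → l ≤ 1 →
      φ (l • x + (1 - l) • y) ≤ (l : EReal) * φ x + ((1 - l : ℝ) : EReal) * φ y) ∧
    LowerSemicontinuous φ ∧ (∃ x, φ x ≠ ⊤)}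

/-- `φ` is positively homogeneous: `φ(λx) = λ·φ(x)` for all `λ > 0`. -/
def PosHomog {n : ℕ} (φ : EuclideanSpace ℝ (Fin n) → EReal) : Prop :=
  ∀ l : ℝ, 0 < l → ∀ x, φ (l • x) = (l : EReal) * φ x

/-- The affine function `x ↦ ⟨x, a⟩ + c`, viewed as an element of `Cvx(ℝⁿ)`. -/
def affineFn {n : ℕ} (a : EuclideanSpace ℝ (Fin n)) (c : ℝ) :
    EuclideanSpace ℝ (Fin n) → EReal :=
  fun x => ((⟪x, a⟫ + c : ℝ) : EReal)

theorem affineFn_mem {n : ℕ} (a : EuclideanSpace ℝ (Fin n)) (c : ℝ) :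
    affineFn a c ∈ CvxFns n := by
  refine ⟨fun x => EReal.coe_ne_bot _, ?_, ?_, 0, EReal.coe_ne_top _⟩
  · intro x y l _ _
    simp only [affineFn]
    rw [← EReal.coe_mul, ← EReal.coe_mul, ← EReal.coe_add, EReal.coe_le_coe_iff]
    rw [inner_add_left, real_inner_smul_left, real_inner_smul_left]
    apply le_of_eq
    ring
  · apply Continuous.lowerSemicontinuous
    unfold affineFn
    exact continuous_coe_real_ereal.comp (by fun_prop)

theorem stmt_4 {n : ℕ} (hn : 1 ≤ n)
    (T : (EuclideanSpace ℝ (Fin n) → EReal) → (EuclideanSpace ℝ (Fin n) → EReal))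
    (hmap : ∀ φ ∈ CvxFns n, T φ ∈ CvxFns n)
    (hord : ∀ φ ∈ CvxFns n, ∀ ψ ∈ CvxFns n,
      ((∀ x, φ x ≤ ψ x) ↔ (∀ x, T φ x ≤ T ψ x)))
    (hhom : ∀ φ ∈ CvxFns n, PosHomog φ → T φ = φ) :
    ∀ a : EuclideanSpace ℝ (Fin n), ∀ c : ℝ, c < 0 →
      ∃ c' : ℝ, c' < 0 ∧ T (affineFn a c) = affineFn a c' := by
  intro a c hc
  have hl : T (affineFn a 0) = affineFn a 0 := by
    refine hhom _ (affineFn_mem a 0) ?_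
    intro l _ x
    simp only [affineFn]
    rw [← EReal.coe_mul, real_inner_smul_left]
    congr 1
    ring
  have hle : ∀ x, T (affineFn a c) x ≤ affineFn a 0 x := by
    rw [← hl]
    refine (hord _ (affineFn_mem a c) _ (affineFn_mem a 0)).1 ?_
    intro x
    simp only [affineFn]
    rw [EReal.coe_le_coe_iff]
    linarith
  obtain ⟨hbot, hcv, -, -⟩ := hmap _ (affineFn_mem a c)
  have hfin : ∀ x, ∃ r : ℝ, T (affineFn a c) x = ((⟪x, a⟫ + r : ℝ) : EReal) := by
    intro x
    have ht : T (affineFn a c) x ≠ ⊤ := by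
      intro h
      have h1 := hle x
      rw [h, top_le_iff] at h1
      exact EReal.coe_ne_top _ h1
    refine ⟨(T (affineFn a c) x).toReal - ⟪x, a⟫, ?_⟩
    rw [add_sub_cancel, EReal.coe_toReal ht (hbot x)]
  choose g hg using hfin
  have g0 : ∀ x, g x ≤ 0 := by
    intro x
    have h := hle x
    rw [hg x] at h
    simp only [affineFn] at h
    rw [EReal.coe_le_coe_iff] at h
    linarith
  have gc : ∀ x y : EuclideanSpace ℝ (Fin n), ∀ l : ℝ, 0 ≤ l → l ≤ 1 →
      g (l • x + (1 - l) • y) ≤ l * g x + (1 - l) * g y := by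
    intro x y l h0 h1
    have h := hcv x y l h0 h1
    rw [hg, hg, hg, ← EReal.coe_mul, ← EReal.coe_mul, ← EReal.coe_add, EReal.coe_le_coe_iff,
      inner_add_left, real_inner_smul_left, real_inner_smul_left] at h
    linarith
  have key : ∀ x y, g x ≤ g y := by
    intro x y
    by_contra! hlt
    have hx := g0 x
    have hd : 0 < 1 - g y := by linarith
    obtain ⟨l, hl'⟩ : ∃ l, l = (g x - g y) / (1 - g y) := ⟨_, rfl⟩
    have hl0 : 0 < l := hl' ▸ div_pos (by linarith) hd
    have hl1 : l ≤ 1 := by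
      rw [hl', div_le_one hd]; linarith
    have hm : l * (1 - g y) = g x - g y := by
      rw [hl']; field_simp
    have h := gc (y + l⁻¹ • (x - y)) y l hl0.le hl1
    have e : l • (y + l⁻¹ • (x - y)) + (1 - l) • y = x := by
      rw [smul_add, smul_smul, mul_inv_cancel₀ hl0.ne', sub_smul, one_smul, one_smul]
      abel
    rw [e] at h
    have := mul_nonpos_of_nonneg_of_nonpos hl0.le (g0 (y + l⁻¹ • (x - y)))
    nlinarith
  have hT : T (affineFn a c) = affineFn a (g 0) := by
    funext x
    rw [hg x, le_antisymm (key x 0) (key 0 x)]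
    rfl
  refine ⟨g 0, lt_of_le_of_ne (g0 0) ?_, hT⟩
  intro hz
  rw [hz, ← hl] at hT
  have h := (hord _ (affineFn_mem a 0) _ (affineFn_mem a c)).2 (fun x => by rw [hT]) 0
  simp only [affineFn] at h
  rw [EReal.coe_le_coe_iff] at h
  linarith
end
end

section
/- Let n ≥ 1, −1/n < α < 0 (so β = −1/α > n), κ = α/(1 + nα), let f ∈ C_α(ℝⁿ) be Lebesgue integrable with ∫f > 0, and let 0 < ε < 1. Then the α-sum G_α ⋆_α (ε ·_α f) is well defined and ∫_{ℝⁿ} (G_α ⋆_α (ε ·_α f))(x) dx ≥ [ (1−ε)^{1−κn/2}·(∫ G_α)^κ + ε·(∫ f)^κ ]^{1/κ} (note κ < 0). -/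
open scoped RealInnerProductSpace Topology ENNReal
open MeasureTheory Filter

noncomputable section

/-- `f : ℝⁿ → [0,∞)` is `α`-concave: its support is convex and `f` satisfies the
`α`-mean inequality on its support. -/
def AlphaConcave (n : ℕ) (α : ℝ) (f : EuclideanSpace ℝ (Fin n) → ℝ) : Prop :=
  Convex ℝ {x | f x ≠ 0} ∧
  ∀ x y : EuclideanSpace ℝ (Fin n), f x ≠ 0 → f y ≠ 0 → ∀ l : ℝ, 0 ≤ l → l ≤ 1 →
    (l * f x ^ α + (1 - l) * f y ^ α) ^ (1 / α) ≤ f (l • x + (1 - l) • y)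

/-- `C_α(ℝⁿ)`: upper semicontinuous `α`-concave functions `f : ℝⁿ → [0,∞)`
with `f` not identically `0`. -/
def CAlpha (n : ℕ) (α : ℝ) : Set (EuclideanSpace ℝ (Fin n) → ℝ) :=
  {f | (∀ x, 0 ≤ f x) ∧ UpperSemicontinuous f ∧ (∃ x, f x ≠ 0) ∧ AlphaConcave n α f}

/-- The convex base `base_α f = (1 - f^α)/α = β·(f^{-1/β} - 1)` (with `α = -1/β`),
taking the value `∞` where `f = 0`. -/
def convexBase {n : ℕ} (β : ℝ) (f : EuclideanSpace ℝ (Fin n) → ℝ) :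
    EuclideanSpace ℝ (Fin n) → EReal :=
  fun x => if f x = 0 then ⊤ else ((β * (f x ^ (-1 / β) - 1) : ℝ) : EReal)

/-- The `α`-concave function with the given convex base: `f = (1 + φ/β)^{-β}`. -/
def ofBase {n : ℕ} (β : ℝ) (φ : EuclideanSpace ℝ (Fin n) → EReal) :
    EuclideanSpace ℝ (Fin n) → ℝ :=
  fun x => if φ x = ⊤ then 0 else (1 + (φ x).toReal / β) ^ (-β)

/-- Inf-convolution: `(φ □ ψ)(x) = inf_{y+z=x} [φ(y) + ψ(z)]`. -/
def infConv {n : ℕ} (φ ψ : EuclideanSpace ℝ (Fin n) → EReal) :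
    EuclideanSpace ℝ (Fin n) → EReal :=
  fun x => ⨅ y : EuclideanSpace ℝ (Fin n), φ y + ψ (x - y)

/-- The base of the `λ`-homothety: `x ↦ λ·φ(x/λ)`. -/
def scaleBase {n : ℕ} (l : ℝ) (φ : EuclideanSpace ℝ (Fin n) → EReal) :
    EuclideanSpace ℝ (Fin n) → EReal :=
  fun x => (l : EReal) * φ (l⁻¹ • x)

/-- `base_α G_α`, i.e. the function `x ↦ |x|²/2`. -/
def gaussBase (n : ℕ) : EuclideanSpace ℝ (Fin n) → EReal :=
  fun x => ((‖x‖ ^ 2 / 2 : ℝ) : EReal)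

/-- The Legendre transform `φ*(y) = sup_x (⟨x,y⟩ - φ(x))`. -/
def legendre {n : ℕ} (φ : EuclideanSpace ℝ (Fin n) → EReal) :
    EuclideanSpace ℝ (Fin n) → EReal :=
  fun y => ⨆ x : EuclideanSpace ℝ (Fin n), (((⟪x, y⟫ : ℝ) : EReal) - φ x)

/-- The `α`-mean `[l·u^α + (1-l)·v^α]^{1/α}` with the conventions `0^α = +∞`,
`(+∞)^{1/α} = 0` (for `α < 0`). -/
def alphaMean (α l u v : ℝ) : ℝ :=
  if u = 0 ∨ v = 0 then 0 else (l * u ^ α + (1 - l) * v ^ α) ^ (1 / α)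


lemma bbl_lim (A c e S : ℝ≥0∞) (hc : c ≠ ⊤) (h0 : e ≤ S) (h : ∀ r < A, c * r + e ≤ S) :
    c * A + e ≤ S := by
  by_cases hA : A = 0
  · simpa [hA] using h0
  have hcont : Continuous fun r : ℝ≥0∞ => c * r + e :=
    (ENNReal.continuous_const_mul hc).add continuous_const
  have : (𝓝[<] A).NeBot := by
    apply nhdsLT_neBot_of_exists_lt
    exact ⟨0, pos_iff_ne_zero.2 hA⟩
  have ht : Tendsto (fun r : ℝ≥0∞ => c * r + e) (𝓝[<] A) (𝓝 (c * A + e)) :=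
    (hcont.tendsto A).mono_left nhdsWithin_le_nhds
  exact le_of_tendsto ht (eventually_mem_nhdsWithin.mono fun r hr => h r hr)

open scoped Pointwise in
lemma bbl_vol_image (c d : ℝ) (hc : 0 < c) (K : Set ℝ) :
    volume ((fun x => c * x + d) '' K) = ENNReal.ofReal c * volume K := by
  have : (fun x => c * x + d) '' K = (fun x => x + d) '' (c • K) := by
    ext z; simp [Set.mem_smul_set, ← sub_eq_add_neg, eq_sub_iff_add_eq]
  rw [this]
  simp [Measure.addHaar_smul, abs_of_pos hc]

lemma bbl_bm_compact (ε : ℝ) (h0 : 0 < ε) (h1 : ε < 1) (K L S : Set ℝ) (hK : IsCompact K)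
    (hL : IsCompact L) (hKn : K.Nonempty) (hLn : L.Nonempty)
    (hS : ∀ x ∈ K, ∀ y ∈ L, (1 - ε) * x + ε * y ∈ S) :
    ENNReal.ofReal (1 - ε) * volume K + ENNReal.ofReal ε * volume L ≤ volume S := by
  obtain ⟨a, ha, hamax⟩ := hK.exists_isGreatest hKn
  obtain ⟨b, hb, hbmin⟩ := hL.exists_isLeast hLn
  rw [← bbl_vol_image (1 - ε) (ε * b) (by linarith) K, ← bbl_vol_image ε ((1-ε) * a) h0 L]
  rw [← measure_union₀]
  · apply measure_mono
    rintro z (⟨x, hx, rfl⟩ | ⟨y, hy, rfl⟩)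
    · exact hS x hx b hb
    · have := hS a ha y hy
      simpa [add_comm] using this
  · exact (hL.image (by fun_prop)).measurableSet.nullMeasurableSet
  · refine measure_mono_null (t := {(1 - ε) * a + ε * b}) ?_ (by simp)
    rintro z ⟨⟨x, hx, rfl⟩, ⟨y, hy, hxy⟩⟩
    have e1 := hamax hx
    have e2 := hbmin hy
    simp only at hxy
    have e3 : (1 - ε) * x ≤ (1 - ε) * a := by gcongr
    have e4 : ε * b ≤ ε * y := by gcongr
    simp only [Set.mem_singleton_iff]
    linarith

lemma bbl_bm (ε : ℝ) (h0 : 0 < ε) (h1 : ε < 1) (A B S : Set ℝ) (hA : MeasurableSet A)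
    (hB : MeasurableSet B) (hAn : A.Nonempty) (hBn : B.Nonempty)
    (hS : ∀ x ∈ A, ∀ y ∈ B, (1 - ε) * x + ε * y ∈ S) :
    ENNReal.ofReal (1 - ε) * volume A + ENNReal.ofReal ε * volume B ≤ volume S := by
  obtain ⟨a, ha⟩ := hAn
  obtain ⟨b, hb⟩ := hBn
  have key : ∀ r < volume A, ∀ s < volume B,
      ENNReal.ofReal (1 - ε) * r + ENNReal.ofReal ε * s ≤ volume S := by
    intro r hr s hs
    obtain ⟨K, hKA, hK, hrK⟩ := hA.exists_lt_isCompact hr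
    obtain ⟨L, hLB, hL, hsL⟩ := hB.exists_lt_isCompact hs
    have := bbl_bm_compact ε h0 h1 (insert a K) (insert b L) S (hK.insert a) (hL.insert b)
      (by simp) (by simp) (fun x hx y hy => hS x (Set.insert_subset ha hKA hx) y
        (Set.insert_subset hb hLB hy))
    refine le_trans ?_ this
    gcongr
    · exact hrK.le.trans (measure_mono (Set.subset_insert _ _))
    · exact hsL.le.trans (measure_mono (Set.subset_insert _ _))
  have keyA : ∀ r < volume A, ENNReal.ofReal (1 - ε) * r ≤ volume S := by
    intro r hr
    obtain ⟨K, hKA, hK, hrK⟩ := hA.exists_lt_isCompact hr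
    have := bbl_bm_compact ε h0 h1 (insert a K) {b} S (hK.insert a) isCompact_singleton
      (by simp) (by simp) (fun x hx y hy => hS x (Set.insert_subset ha hKA hx) y
        (by rw [Set.mem_singleton_iff.1 hy]; exact hb))
    refine le_trans ?_ this
    refine le_add_right ?_
    gcongr
    · exact hrK.le.trans (measure_mono (Set.subset_insert _ _))
  have keyB : ∀ r < volume B, ENNReal.ofReal ε * r ≤ volume S := by
    intro r hr
    obtain ⟨K, hKA, hK, hrK⟩ := hB.exists_lt_isCompact hr
    have := bbl_bm_compact ε h0 h1 {a} (insert b K) S isCompact_singleton (hK.insert b)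
      (by simp) (by simp) (fun y hy x hx => hS y
        (by rw [Set.mem_singleton_iff.1 hy]; exact ha) x (Set.insert_subset hb hKA hx))
    refine le_trans ?_ this
    refine le_add_left ?_
    gcongr
    · exact hrK.le.trans (measure_mono (Set.subset_insert _ _))
  apply bbl_lim _ _ _ _ ENNReal.ofReal_ne_top
  · simpa using bbl_lim (volume B) (ENNReal.ofReal ε) 0 (volume S) ENNReal.ofReal_ne_top (by simp)
      (by simpa using keyB)
  · intro r hr
    rw [add_comm]
    apply bbl_lim _ _ _ _ ENNReal.ofReal_ne_top
    · exact keyA r hr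
    · intro s hs
      rw [add_comm]
      exact key r hr s hs

lemma bbl_one_norm (ε : ℝ) (h0 : 0 < ε) (h1 : ε < 1) (g f h : ℝ → ℝ)
    (hg : Measurable g) (hf : Measurable f) (hh : Measurable h)
    (hg0 : ∀ x, 0 ≤ g x) (hf0 : ∀ x, 0 ≤ f x) (hh0 : ∀ x, 0 ≤ h x)
    (hg1 : ∀ x, g x ≤ 1) (hf1 : ∀ x, f x ≤ 1)
    (hgs : ∀ t < 1, ∃ x, t < g x) (hfs : ∀ t < 1, ∃ x, t < f x)
    (H : ∀ x y, min (g x) (f y) ≤ h ((1 - ε) * x + ε * y)) :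
    ENNReal.ofReal (1 - ε) * (∫⁻ x, ENNReal.ofReal (g x)) +
      ENNReal.ofReal ε * (∫⁻ x, ENNReal.ofReal (f x)) ≤ ∫⁻ x, ENNReal.ofReal (h x) := by
  rw [lintegral_eq_lintegral_meas_lt _ (ae_of_all _ hg0) hg.aemeasurable,
    lintegral_eq_lintegral_meas_lt _ (ae_of_all _ hf0) hf.aemeasurable,
    lintegral_eq_lintegral_meas_lt _ (ae_of_all _ hh0) hh.aemeasurable]
  have hm : ∀ u : ℝ → ℝ, Measurable (fun t : ℝ => volume {a | t < u a}) := fun u =>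
    Antitone.measurable (fun s t hst => measure_mono (fun a ha => lt_of_le_of_lt hst ha))
  rw [← lintegral_const_mul _ (hm g), ← lintegral_const_mul _ (hm f),
    ← lintegral_add_left ((hm g).const_mul _)]
  apply lintegral_mono
  intro t
  by_cases ht : t < 1
  · apply bbl_bm ε h0 h1
    · exact measurableSet_lt measurable_const hg
    · exact measurableSet_lt measurable_const hf
    · exact hgs t ht
    · exact hfs t ht
    · intro x hx y hy
      exact lt_of_lt_of_le (lt_min hx hy) (H x y)
  · have e1 : {a | t < g a} = ∅ := by
      ext a; simp; linarith [hg1 a]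
    have e2 : {a | t < f a} = ∅ := by
      ext a; simp; linarith [hf1 a]
    simp [e1, e2]

noncomputable def bblM (ε p : ℝ) (a b : ℝ≥0∞) : ℝ≥0∞ :=
  (ENNReal.ofReal (1 - ε) * a ^ p + ENNReal.ofReal ε * b ^ p) ^ (1 / p)

lemma bbl_anti {x y : ℝ≥0∞} {z : ℝ} (hz : z ≤ 0) (h : x ≤ y) : y ^ z ≤ x ^ z := by
  have := ENNReal.inv_le_inv.2 (ENNReal.rpow_le_rpow h (neg_nonneg.2 hz))
  simpa [ENNReal.rpow_neg] using this

lemma bblM_mono {ε p : ℝ} (hp : p < 0) {a b a' b' : ℝ≥0∞} (ha : a ≤ a') (hb : b ≤ b') :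
    bblM ε p a b ≤ bblM ε p a' b' := by
  unfold bblM
  apply bbl_anti (by rw [one_div]; exact (inv_lt_zero.2 hp).le)
  have e1 := bbl_anti hp.le ha
  have e2 := bbl_anti hp.le hb
  gcongr

lemma bblM_smul {ε p : ℝ} (hp : p < 0) {m : ℝ≥0∞} (hm0 : m ≠ 0) (hm : m ≠ ⊤) (a b : ℝ≥0∞) :
    bblM ε p (m * a) (m * b) = m * bblM ε p a b := by
  unfold bblM
  have h1 : ∀ x : ℝ≥0∞, ∀ q : ℝ, (m * x) ^ q = m ^ q * x ^ q := by
    intro x q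
    rw [ENNReal.mul_rpow_eq_ite]
    simp [hm0, hm]
  have hmp : m ^ p ≠ 0 := by simp [ENNReal.rpow_eq_zero_iff, hm0, hm]
  have hmp' : m ^ p ≠ ⊤ := by simp [ENNReal.rpow_eq_top_iff, hm0, hm]
  rw [h1, h1, show ENNReal.ofReal (1 - ε) * (m ^ p * a ^ p) + ENNReal.ofReal ε * (m ^ p * b ^ p) =
    m ^ p * (ENNReal.ofReal (1 - ε) * a ^ p + ENNReal.ofReal ε * b ^ p) by ring,
    ENNReal.mul_rpow_eq_ite, if_neg (by simp [hmp, hmp']), ← ENNReal.rpow_mul,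
    mul_one_div_cancel hp.ne, ENNReal.rpow_one]

lemma bblM_zero_left {ε p : ℝ} (h1 : ε < 1) (hp : p < 0) (b : ℝ≥0∞) : bblM ε p 0 b = 0 := by
  unfold bblM
  rw [ENNReal.zero_rpow_of_neg hp, ENNReal.mul_top (by simpa using h1), top_add,
    ENNReal.top_rpow_of_neg (by rw [one_div]; exact inv_lt_zero.2 hp)]

lemma bblM_zero_right {ε p : ℝ} (h0 : 0 < ε) (hp : p < 0) (a : ℝ≥0∞) : bblM ε p a 0 = 0 := by
  unfold bblM
  rw [ENNReal.zero_rpow_of_neg hp, ENNReal.mul_top (by simpa using h0), add_top,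
    ENNReal.top_rpow_of_neg (by rw [one_div]; exact inv_lt_zero.2 hp)]

lemma bblM_continuous {ε p : ℝ} : Continuous fun x : ℝ≥0∞ × ℝ≥0∞ => bblM ε p x.1 x.2 := by
  unfold bblM
  refine ENNReal.continuous_rpow_const.comp (Continuous.add ?_ ?_)
  · exact (ENNReal.continuous_const_mul ENNReal.ofReal_ne_top).comp
      (ENNReal.continuous_rpow_const.comp continuous_fst)
  · exact (ENNReal.continuous_const_mul ENNReal.ofReal_ne_top).comp
      (ENNReal.continuous_rpow_const.comp continuous_snd)

lemma bblM_pos {ε p : ℝ} (h0 : 0 < ε) (h1 : ε < 1) (hp : p < 0) {a b : ℝ≥0∞} (ha : a ≠ 0) (hb : b ≠ 0) : bblM ε p a b ≠ 0 := by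
  unfold bblM
  have hp' : 1 / p < 0 := by rw [one_div]; exact inv_lt_zero.2 hp
  simp [ENNReal.rpow_eq_zero_iff, hp.not_gt, ENNReal.mul_eq_top, hp.le, ENNReal.rpow_eq_top_iff, ha, hb]

lemma bblM_fin {ε p : ℝ} (h0 : 0 < ε) (h1 : ε < 1) (hp : p < 0) {a b : ℝ≥0∞} (ha : a ≠ ⊤) :
    bblM ε p a b ≠ ⊤ := by
  unfold bblM
  simp [ENNReal.rpow_eq_top_iff, hp.not_gt, hp, ENNReal.rpow_eq_zero_iff, ha, h1, not_le]

lemma bbl_holder {ε p κ : ℝ} (h0 : 0 < ε) (h1 : ε < 1) (hp : p < 0) (hp1 : -1 < p)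
    (hκ : κ = p / (1 + p)) {a b u v : ℝ≥0∞} (ha0 : a ≠ 0) (ha : a ≠ ⊤) (hb0 : b ≠ 0) (hb : b ≠ ⊤) :
    bblM ε κ (a * u) (b * v) ≤
      bblM ε p a b * (ENNReal.ofReal (1 - ε) * u + ENNReal.ofReal ε * v) := by
  have hκ0 : κ < 0 := by rw [hκ]; exact div_neg_of_neg_of_pos hp (by linarith)
  have w1 : ENNReal.ofReal (1 - ε) ≠ 0 := by simpa using h1
  have w2 : ENNReal.ofReal ε ≠ 0 := by simpa using h0
  by_cases hu0 : u = 0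
  · simp [hu0, bblM_zero_left h1 hκ0]
  by_cases hv0 : v = 0
  · simp [hv0, bblM_zero_right h0 hκ0]
  have hM := bblM_pos h0 h1 hp ha0 hb0
  by_cases hu : u = ⊤
  · simp [hu, ENNReal.mul_top w1, ENNReal.mul_top hM]
  by_cases hv : v = ⊤
  · simp [hv, ENNReal.mul_top w2, ENNReal.mul_top hM]
  set c := ENNReal.ofReal (1 - ε) with hc
  set d := ENNReal.ofReal ε with hd
  have hct : c ≠ ⊤ := ENNReal.ofReal_ne_top
  have hdt : d ≠ ⊤ := ENNReal.ofReal_ne_top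
  have hconj : (1 / (1 + p)).HolderConjugate (1 / (-p)) := by
    rw [Real.holderConjugate_iff]
    constructor
    · rw [one_lt_div (by linarith)]; linarith
    · simp
  set T := c * (a * u) ^ κ + d * (b * v) ^ κ with hT
  set U := c * u + d * v with hU
  have hol : c * a ^ p + d * b ^ p ≤ T ^ (1 + p) * U ^ (-p) := by
    have key := ENNReal.inner_le_Lp_mul_Lq Finset.univ
      ![(c * (a * u) ^ κ) ^ (1 + p), (d * (b * v) ^ κ) ^ (1 + p)]
      ![(c * u) ^ (-p), (d * v) ^ (-p)] hconj
    have e : ∀ x y z : ℝ≥0∞, x ≠ 0 → x ≠ ⊤ → y ≠ 0 → y ≠ ⊤ → z ≠ 0 → z ≠ ⊤ →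
        (x * (y * z) ^ κ) ^ (1 + p) * (x * z) ^ (-p) = x * y ^ p := by
      intro x y z hx hx' hy hy' hz hz'
      have e1 : ∀ q : ℝ, (y * z) ^ q = y ^ q * z ^ q := fun q => 
        ENNReal.mul_rpow_of_ne_zero hy hz q
      have hyz : (y * z) ^ κ ≠ 0 := by
        simp [ENNReal.rpow_eq_zero_iff, hy, hz, hκ0.not_gt, ENNReal.mul_eq_top, hy', hz']
      rw [ENNReal.mul_rpow_of_ne_zero hx hyz, ← ENNReal.rpow_mul,
        ENNReal.mul_rpow_of_ne_zero hx hz]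
      have : κ * (1 + p) = p := by rw [hκ]; field_simp [show 1 + p ≠ 0 by linarith]
      rw [this, e1, show x ^ (1 + p) * (y ^ p * z ^ p) * (x ^ (-p) * z ^ (-p)) =
        (x ^ (1 + p) * x ^ (-p)) * y ^ p * (z ^ p * z ^ (-p)) by ring,
        ← ENNReal.rpow_add _ _ hx hx', ← ENNReal.rpow_add _ _ hz hz']
      simp
    have f1 : ∀ x : ℝ≥0∞, (x ^ (1 + p)) ^ (1 / (1 + p)) = x := by
      intro x
      rw [← ENNReal.rpow_mul, mul_one_div_cancel (by linarith), ENNReal.rpow_one]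
    have f2 : ∀ x : ℝ≥0∞, (x ^ (-p)) ^ (1 / (-p)) = x := by
      intro x
      rw [← ENNReal.rpow_mul, mul_one_div_cancel (by linarith), ENNReal.rpow_one]
    simp only [Fin.sum_univ_two, Matrix.cons_val_zero, Matrix.cons_val_one, f1, f2,
      one_div_one_div] at key
    rwa [e c a u w1 hct ha0 ha hu0 hu, e d b v w2 hdt hb0 hb hv0 hv] at key
  have hU0 : U ≠ 0 := by simp [hU, w1, hu0]
  have hUt : U ≠ ⊤ := by simp [hU, ENNReal.mul_eq_top, hct, hdt, hu, hv]
  have hT0 : T ≠ 0 := by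
    simp [hT, ENNReal.rpow_eq_zero_iff, w1, hu0, ha0, ha, hu, hκ0.not_gt, ENNReal.mul_eq_top]
  have h2 := bbl_anti (z := 1 / p)
    (by rw [one_div]; exact (inv_lt_zero.2 hp).le) hol
  have hTp : T ^ (1 + p) ≠ 0 := by
    simp [ENNReal.rpow_eq_zero_iff, hT0]; intro; linarith
  have hUp : U ^ (-p) ≠ 0 := by
    simp [ENNReal.rpow_eq_zero_iff, hU0, hUt]
  rw [ENNReal.mul_rpow_of_ne_zero hTp hUp, ← ENNReal.rpow_mul, ← ENNReal.rpow_mul] at h2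
  have e1 : (1 + p) * (1 / p) = 1 / κ := by rw [hκ]; field_simp
  have e2 : -p * (1 / p) = -1 := by field_simp [hp.ne]
  rw [e1, e2, ENNReal.rpow_neg_one] at h2
  calc bblM ε κ (a * u) (b * v) = T ^ (1 / κ) := rfl
    _ = T ^ (1 / κ) * U⁻¹ * U := by
      rw [mul_assoc, ENNReal.inv_mul_cancel hU0 hUt, mul_one]
    _ ≤ bblM ε p a b * U := by gcongr; exact h2

lemma bbl_one_bdd {ε p κ : ℝ} (h0 : 0 < ε) (h1 : ε < 1) (hp : p < 0) (hp1 : -1 < p)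
    (hκ : κ = p / (1 + p)) (g f h : ℝ → ℝ≥0∞)
    (hg : Measurable g) (hf : Measurable f) (hh : Measurable h) (N : ℝ≥0∞) (hN : N ≠ ⊤)
    (hgN : ∀ x, g x ≤ N) (hfN : ∀ x, f x ≤ N)
    (H : ∀ x y, bblM ε p (g x) (f y) ≤ h ((1 - ε) * x + ε * y)) :
    bblM ε κ (∫⁻ x, g x) (∫⁻ x, f x) ≤ ∫⁻ x, h x := by
  have hκ0 : κ < 0 := by rw [hκ]; exact div_neg_of_neg_of_pos hp (by linarith)
  set a := ⨆ x, g x with ha_def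
  set b := ⨆ x, f x with hb_def
  have ga : ∀ x, g x ≤ a := le_iSup g
  have fb : ∀ x, f x ≤ b := le_iSup f
  have ha : a ≠ ⊤ := ((iSup_le hgN).trans_lt hN.lt_top).ne
  have hb : b ≠ ⊤ := ((iSup_le hfN).trans_lt hN.lt_top).ne
  by_cases ha0 : a = 0
  · have : ∀ x, g x = 0 := fun x => le_antisymm (ha0 ▸ ga x) bot_le
    simp [this, bblM_zero_left h1 hκ0]
  by_cases hb0 : b = 0
  · have : ∀ x, f x = 0 := fun x => le_antisymm (hb0 ▸ fb x) bot_le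
    simp [this, bblM_zero_right h0 hκ0]
  set C := bblM ε p a b with hC
  have hC0 : C ≠ 0 := bblM_pos h0 h1 hp ha0 hb0
  have hCt : C ≠ ⊤ := bblM_fin h0 h1 hp ha
  have gd : ∀ x, g x / a ≤ 1 := fun x => ENNReal.div_le_of_le_mul (by simpa using ga x)
  have fd : ∀ x, f x / b ≤ 1 := fun x => ENNReal.div_le_of_le_mul (by simpa using fb x)
  have gdt : ∀ x, g x / a ≠ ⊤ := fun x => ((gd x).trans_lt ENNReal.one_lt_top).ne
  have fdt : ∀ x, f x / b ≠ ⊤ := fun x => ((fd x).trans_lt ENNReal.one_lt_top).ne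
  have hdt : ∀ x, min (h x / C) 1 ≠ ⊤ := fun x =>
    ((min_le_right _ _).trans_lt ENNReal.one_lt_top).ne
  have hsup : ∀ (u : ℝ → ℝ≥0∞) (s : ℝ≥0∞), s = ⨆ x, u x → s ≠ 0 → s ≠ ⊤ →
      (∀ x, u x / s ≠ ⊤) → ∀ t < (1:ℝ), ∃ x, t < (u x / s).toReal := by
    intro u s hs hs0 hst hut t ht
    by_contra! hcon
    have ht0 : 0 ≤ t := ENNReal.toReal_nonneg.trans (hcon 0)
    have h2 : s ≤ ENNReal.ofReal t * s := by
      conv_lhs => rw [hs]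
      refine iSup_le fun x => ?_
      rw [← ENNReal.div_le_iff hs0 hst]
      exact (ENNReal.le_ofReal_iff_toReal_le (hut x) ht0).2 (hcon x)
    have h3 : ENNReal.ofReal t * s < 1 * s := by
      rw [ENNReal.mul_lt_mul_iff_left hs0 hst]
      simpa using ht
    rw [one_mul] at h3
    exact absurd h2 h3.not_ge
  have key := bbl_one_norm ε h0 h1 (fun x => (g x / a).toReal) (fun x => (f x / b).toReal)
    (fun x => (min (h x / C) 1).toReal)
    (hg.div_const _).ennreal_toReal (hf.div_const _).ennreal_toReal
    ((hh.div_const _).min measurable_const).ennreal_toReal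
    (fun _ => ENNReal.toReal_nonneg) (fun _ => ENNReal.toReal_nonneg)
    (fun _ => ENNReal.toReal_nonneg)
    (fun x => by simpa using ENNReal.toReal_mono ENNReal.one_ne_top (gd x))
    (fun x => by simpa using ENNReal.toReal_mono ENNReal.one_ne_top (fd x))
    (hsup g a ha_def ha0 ha gdt) (hsup f b hb_def hb0 hb fdt) ?_
  · simp only [ENNReal.ofReal_toReal (gdt _), ENNReal.ofReal_toReal (fdt _),
      ENNReal.ofReal_toReal (hdt _)] at key
    have k2 : ∫⁻ x, min (h x / C) 1 ≤ (∫⁻ x, h x) / C := by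
      calc ∫⁻ x, min (h x / C) 1 ≤ ∫⁻ x, h x / C := lintegral_mono fun x => min_le_left _ _
        _ = _ := by simp only [div_eq_mul_inv]; rw [lintegral_mul_const _ hh]
    have k3 : (∫⁻ x, g x) = a * ∫⁻ x, g x / a := by
      simp only [div_eq_mul_inv]
      rw [lintegral_mul_const _ hg, mul_comm, mul_assoc, ENNReal.inv_mul_cancel ha0 ha, mul_one]
    have k4 : (∫⁻ x, f x) = b * ∫⁻ x, f x / b := by
      simp only [div_eq_mul_inv]
      rw [lintegral_mul_const _ hf, mul_comm, mul_assoc, ENNReal.inv_mul_cancel hb0 hb, mul_one]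
    rw [k3, k4]
    calc _ ≤ C * (ENNReal.ofReal (1 - ε) * (∫⁻ x, g x / a) + ENNReal.ofReal ε * (∫⁻ x, f x / b)) :=
          bbl_holder h0 h1 hp hp1 hκ ha0 ha hb0 hb
      _ ≤ C * ((∫⁻ x, h x) / C) := by gcongr; exact key.trans k2
      _ = _ := ENNReal.mul_div_cancel hC0 hCt
  · intro x y
    rw [← ENNReal.toReal_min (gdt x) (fdt y)]
    apply ENNReal.toReal_mono (hdt _)
    set m := min (g x / a) (f y / b) with hm
    have hm1 : m ≤ 1 := (min_le_left _ _).trans (gd x)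
    apply le_min _ hm1
    by_cases hm0 : m = 0
    · simp [hm0]
    rw [ENNReal.le_div_iff_mul_le (Or.inl hC0) (Or.inl hCt), hC,
      ← bblM_smul hp hm0 (hm1.trans_lt ENNReal.one_lt_top).ne]
    refine le_trans (bblM_mono hp ?_ ?_) (H x y)
    · rw [← ENNReal.le_div_iff_mul_le (Or.inl ha0) (Or.inl ha)]; exact min_le_left _ _
    · rw [← ENNReal.le_div_iff_mul_le (Or.inl hb0) (Or.inl hb)]; exact min_le_right _ _

lemma bbl_one {ε p κ : ℝ} (h0 : 0 < ε) (h1 : ε < 1) (hp : p < 0) (hp1 : -1 < p)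
    (hκ : κ = p / (1 + p)) (g f h : ℝ → ℝ≥0∞)
    (hg : Measurable g) (hf : Measurable f) (hh : Measurable h)
    (H : ∀ x y, bblM ε p (g x) (f y) ≤ h ((1 - ε) * x + ε * y)) :
    bblM ε κ (∫⁻ x, g x) (∫⁻ x, f x) ≤ ∫⁻ x, h x := by
  have lim : ∀ u : ℝ → ℝ≥0∞, Measurable u →
      Tendsto (fun N : ℕ => ∫⁻ x, min (u x) N) atTop (𝓝 (∫⁻ x, u x)) := by
    intro u hu
    apply lintegral_tendsto_of_tendsto_of_monotone
    · exact fun N => (hu.min measurable_const).aemeasurable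
    · refine ae_of_all _ fun x i j hij => ?_
      simp only
      gcongr
    · refine ae_of_all _ fun x => ?_
      have := (tendsto_const_nhds (x := u x)).min ENNReal.tendsto_nat_nhds_top
      simpa using this
  have l2 := (bblM_continuous (ε := ε) (p := κ)).tendsto (∫⁻ x, g x, ∫⁻ x, f x)
  have l3 := l2.comp ((lim g hg).prodMk_nhds (lim f hf))
  refine le_of_tendsto l3 (Eventually.of_forall fun N => ?_)
  apply bbl_one_bdd h0 h1 hp hp1 hκ _ _ h (hg.min measurable_const) (hf.min measurable_const) hh N
    (ENNReal.natCast_ne_top N) (fun x => min_le_right _ _) (fun x => min_le_right _ _)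
  intro x y
  exact (bblM_mono hp (min_le_left _ _) (min_le_left _ _)).trans (H x y)

lemma bbl_n {ε : ℝ} (h0 : 0 < ε) (h1 : ε < 1) (n : ℕ) : ∀ (p : ℝ), p < 0 → 0 < 1 + n * p →
    ∀ (g f h : (Fin n → ℝ) → ℝ≥0∞), Measurable g → Measurable f → Measurable h →
    (∀ x y, bblM ε p (g x) (f y) ≤ h ((1 - ε) • x + ε • y)) →
    bblM ε (p / (1 + n * p)) (∫⁻ x, g x) (∫⁻ x, f x) ≤ ∫⁻ x, h x := by
  induction n with
  | zero =>
    intro p hp hp1 g f h hg hf hh H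
    have := H 0 0
    simp only [Nat.cast_zero, zero_mul, add_zero, div_one]
    rw [Measure.volume_pi_eq_dirac 0]
    simpa [lintegral_dirac] using this
  | succ n ih =>
    intro p hp hp1 g f h hg hf hh H
    push_cast at hp1 ⊢
    have hp2 : 0 < 1 + n * p := by nlinarith
    have mcons0 : ∀ q : ℝ × (Fin n → ℝ),
        (MeasurableEquiv.piFinSuccAbove (fun _ : Fin (n + 1) => ℝ) 0).symm q =
          (Fin.cons q.1 q.2 : Fin (n+1) → ℝ) := by
      intro q
      simp [MeasurableEquiv.piFinSuccAbove]
      rfl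
    have key : ∀ u : (Fin (n+1) → ℝ) → ℝ≥0∞, Measurable u →
        ∫⁻ x, u x = ∫⁻ s : ℝ, ∫⁻ y : Fin n → ℝ, u (Fin.cons s y) := by
      intro u hu
      have mp := (volume_preserving_piFinSuccAbove (fun _ : Fin (n + 1) => ℝ) 0).symm
      rw [← mp.lintegral_comp hu, Measure.volume_eq_prod, lintegral_prod]
      · simp only [mcons0]
      · exact (hu.comp mp.measurable).aemeasurable
    have mcons : Measurable fun q : ℝ × (Fin n → ℝ) => (Fin.cons q.1 q.2 : Fin (n+1) → ℝ) := by
      simp only [← mcons0]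
      exact (volume_preserving_piFinSuccAbove (fun _ : Fin (n + 1) => ℝ) 0).symm.measurable
    have mint : ∀ u : (Fin (n+1) → ℝ) → ℝ≥0∞, Measurable u →
        Measurable fun s : ℝ => ∫⁻ y : Fin n → ℝ, u (Fin.cons s y) := by
      intro u hu
      exact (hu.comp mcons).lintegral_prod_right'
    have mcons' : ∀ s : ℝ, Measurable fun y : Fin n → ℝ => (Fin.cons s y : Fin (n+1) → ℝ) :=
      fun s => mcons.comp (measurable_const.prodMk measurable_id)
    rw [key g hg, key f hf, key h hh]
    refine bbl_one (p := p / (1 + n * p)) h0 h1 (div_neg_of_neg_of_pos hp hp2) ?_ ?_ _ _ _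
      (mint g hg) (mint f hf) (mint h hh) ?_
    · rw [lt_div_iff₀ hp2]; linarith
    · have e : 1 + p / (1 + n * p) = (1 + (n + 1) * p) / (1 + n * p) := by
        rw [eq_div_iff hp2.ne', add_mul, div_mul_cancel₀ _ hp2.ne']
        ring
      rw [e, div_div_div_cancel_right₀ hp2.ne']
    · intro s t
      refine ih p hp hp2 _ _ _ (hg.comp (mcons' s)) (hf.comp (mcons' t)) (hh.comp (mcons' _)) ?_
      intro x y
      refine (H _ _).trans (le_of_eq ?_)
      change h _ = h _
      congr 1
      ext i
      refine Fin.cases ?_ (fun j => ?_) i <;> simp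

lemma bbl_E {ε : ℝ} (h0 : 0 < ε) (h1 : ε < 1) (n : ℕ) (p : ℝ) (hp : p < 0) (hp1 : 0 < 1 + n * p)
    (g f h : EuclideanSpace ℝ (Fin n) → ℝ≥0∞) (hg : Measurable g) (hf : Measurable f)
    (hh : Measurable h)
    (H : ∀ x y, bblM ε p (g x) (f y) ≤ h ((1 - ε) • x + ε • y)) :
    bblM ε (p / (1 + n * p)) (∫⁻ x, g x) (∫⁻ x, f x) ≤ ∫⁻ x, h x := by
  have mp := PiLp.volume_preserving_toLp (Fin n)
  rw [← mp.lintegral_comp hg, ← mp.lintegral_comp hf, ← mp.lintegral_comp hh]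
  refine bbl_n h0 h1 n p hp hp1 _ _ _ (hg.comp mp.measurable) (hf.comp mp.measurable)
    (hh.comp mp.measurable) ?_
  intro x y
  exact H _ _

lemma bblM_ofReal {ε p : ℝ} (h0 : 0 < ε) (h1 : ε < 1) {a b : ℝ} (ha : 0 < a) (hb : 0 < b) :
    bblM ε p (ENNReal.ofReal a) (ENNReal.ofReal b) =
      ENNReal.ofReal (((1 - ε) * a ^ p + ε * b ^ p) ^ (1 / p)) := by
  unfold bblM
  have e1 : 0 < 1 - ε := by linarith
  rw [ENNReal.ofReal_rpow_of_pos ha, ENNReal.ofReal_rpow_of_pos hb, ← ENNReal.ofReal_mul e1.le,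
    ← ENNReal.ofReal_mul h0.le, ← ENNReal.ofReal_add (by positivity) (by positivity),
    ENNReal.ofReal_rpow_of_pos (by positivity)]

def bblT {n : ℕ} (α β ε : ℝ) (f : EuclideanSpace ℝ (Fin n) → ℝ)
    (x y : EuclideanSpace ℝ (Fin n)) : ℝ :=
  ‖x - ε • y‖ ^ 2 / 2 + ε * (β * (f y ^ α - 1))

def bblR {n : ℕ} (α β ε : ℝ) (f : EuclideanSpace ℝ (Fin n) → ℝ)
    (x : EuclideanSpace ℝ (Fin n)) : ℝ :=
  ⨅ y : {y // f y ≠ 0}, bblT α β ε f x y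

section
variable {n : ℕ} {α β ε : ℝ} {f : EuclideanSpace ℝ (Fin n) → ℝ}

lemma bblT_lower (hβ : 0 < β) (hε : 0 < ε) (hf : ∀ x, 0 ≤ f x) (x y : EuclideanSpace ℝ (Fin n)) :
    -(ε * β) ≤ bblT α β ε f x y := by
  unfold bblT
  have h1 : 0 ≤ f y ^ α := Real.rpow_nonneg (hf y) α
  have h2 : 0 ≤ ε * β * f y ^ α := by positivity
  nlinarith [sq_nonneg ‖x - ε • y‖]

lemma bblR_le (hβ : 0 < β) (hε : 0 < ε) (hf : ∀ x, 0 ≤ f x) (x y : EuclideanSpace ℝ (Fin n))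
    (hy : f y ≠ 0) : bblR α β ε f x ≤ bblT α β ε f x y :=
  ciInf_le (f := fun y : {y // f y ≠ 0} => bblT α β ε f x y)
    ⟨-(ε * β), by rintro _ ⟨z, rfl⟩; exact bblT_lower hβ hε hf x z⟩ ⟨y, hy⟩

lemma bblR_lower (hβ : 0 < β) (hε : 0 < ε) (hf : ∀ x, 0 ≤ f x) (hne : ∃ x, f x ≠ 0)
    (x : EuclideanSpace ℝ (Fin n)) : -(ε * β) ≤ bblR α β ε f x := by
  obtain ⟨y, hy⟩ := hne
  haveI : Nonempty {y // f y ≠ 0} := ⟨⟨y, hy⟩⟩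
  exact le_ciInf fun z => bblT_lower hβ hε hf x z

lemma bblR_exists (hne : ∃ x, f x ≠ 0) (x : EuclideanSpace ℝ (Fin n)) (c : ℝ)
    (hc : bblR α β ε f x < c) : ∃ y, f y ≠ 0 ∧ bblT α β ε f x y < c := by
  obtain ⟨y, hy⟩ := hne
  haveI : Nonempty {y // f y ≠ 0} := ⟨⟨y, hy⟩⟩
  obtain ⟨z, hz⟩ := exists_lt_of_ciInf_lt hc
  exact ⟨z, z.2, hz⟩

lemma bblT_convex (hα : α < 0) (hβ : 0 < β) (hε : 0 < ε) (hf : ∀ x, 0 ≤ f x)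
    (hc : AlphaConcave n α f)
    (x x' y y' : EuclideanSpace ℝ (Fin n)) (hy : f y ≠ 0) (hy' : f y' ≠ 0) (l m : ℝ)
    (hl : 0 ≤ l) (hm : 0 ≤ m) (hlm : l + m = 1) :
    f (l • y + m • y') ≠ 0 ∧ bblT α β ε f (l • x + m • x') (l • y + m • y') ≤
      l * bblT α β ε f x y + m * bblT α β ε f x' y' := by
  have hz : f (l • y + m • y') ≠ 0 := hc.1 hy hy' hl hm hlm
  refine ⟨hz, ?_⟩
  obtain rfl : m = 1 - l := by linarith
  have h1 := hc.2 y y' hy hy' l hl (by linarith)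
  have p1 : 0 < f y ^ α := Real.rpow_pos_of_pos (lt_of_le_of_ne (hf y) hy.symm) α
  have p2 : 0 < f y' ^ α := Real.rpow_pos_of_pos (lt_of_le_of_ne (hf y') hy'.symm) α
  have hX : 0 < l * f y ^ α + (1 - l) * f y' ^ α := by
    rcases hl.eq_or_lt with rfl | hl'
    · simpa using p2
    · have : 0 ≤ (1 - l) * f y' ^ α := by positivity
      have : 0 < l * f y ^ α := by positivity
      linarith
  have h2 := Real.rpow_le_rpow_of_nonpos (Real.rpow_pos_of_pos hX _) h1 hα.le
  rw [← Real.rpow_mul hX.le, one_div_mul_cancel hα.ne, Real.rpow_one] at h2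
  have h3 : ‖l • x + (1 - l) • x' - ε • (l • y + (1 - l) • y')‖ ^ 2 ≤
      l * ‖x - ε • y‖ ^ 2 + (1 - l) * ‖x' - ε • y'‖ ^ 2 := by
    have e : l • x + (1 - l) • x' - ε • (l • y + (1 - l) • y') =
        l • (x - ε • y) + (1 - l) • (x' - ε • y') := by module
    rw [e]
    have t := norm_add_le (l • (x - ε • y)) ((1 - l) • (x' - ε • y'))
    rw [norm_smul, norm_smul, Real.norm_of_nonneg hl, Real.norm_of_nonneg hm] at t
    have t2 := pow_le_pow_left₀ (norm_nonneg _) t 2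
    nlinarith [mul_nonneg (mul_nonneg hl hm) (sq_nonneg (‖x - ε • y‖ - ‖x' - ε • y'‖))]
  unfold bblT
  have h4 : ε * β * f (l • y + (1 - l) • y') ^ α ≤
      ε * β * (l * f y ^ α + (1 - l) * f y' ^ α) := by gcongr
  nlinarith

lemma bblR_convex (hα : α < 0) (hβ : 0 < β) (hε : 0 < ε) (hf : ∀ x, 0 ≤ f x)
    (hne : ∃ x, f x ≠ 0) (hc : AlphaConcave n α f) :
    ConvexOn ℝ Set.univ (bblR α β ε f) := by
  refine ⟨convex_univ, ?_⟩
  intro x _ x' _ l m hl hm hlm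
  simp only [smul_eq_mul]
  refine le_of_forall_pos_le_add fun δ hδ => ?_
  obtain ⟨y, hy, hyt⟩ := bblR_exists hne x (bblR α β ε f x + δ) (by linarith)
  obtain ⟨y', hy', hyt'⟩ := bblR_exists hne x' (bblR α β ε f x' + δ) (by linarith)
  obtain ⟨hz, ht⟩ := bblT_convex hα hβ hε hf hc x x' y y' hy hy' l m hl hm hlm
  have h1 := (bblR_le hβ hε hf _ _ hz).trans ht
  have h2 := mul_le_mul_of_nonneg_left hyt.le hl
  have h3 := mul_le_mul_of_nonneg_left hyt'.le hm
  have : l * δ + m * δ = δ := by rw [← add_mul, hlm, one_mul]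
  linarith

lemma bbl_infConv (hα : α < 0) (hβe : β = -1 / α) (hβ : 0 < β) (hε : 0 < ε) (hf : ∀ x, 0 ≤ f x)
    (hne : ∃ x, f x ≠ 0) (x : EuclideanSpace ℝ (Fin n)) :
    infConv (gaussBase n) (scaleBase ε (convexBase β f)) x = (bblR α β ε f x : EReal) := by
  have hab : -1 / β = α := by rw [hβe]; field_simp
  have hterm : ∀ y : EuclideanSpace ℝ (Fin n), f y ≠ 0 →
      gaussBase n (x - ε • y) + scaleBase ε (convexBase β f) (ε • y) =
        (bblT α β ε f x y : EReal) := by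
    intro y hy
    have e : ε⁻¹ • ε • y = y := by rw [smul_smul, inv_mul_cancel₀ hε.ne', one_smul]
    simp only [gaussBase, scaleBase, convexBase, e, if_neg hy, hab, bblT]
    norm_cast
  apply le_antisymm
  · refine EReal.le_of_forall_lt_iff_le.1 fun c hc => ?_
    obtain ⟨y, hy, hyt⟩ := bblR_exists hne x c (by exact_mod_cast hc)
    refine (iInf_le _ (x - ε • y)).trans ?_
    rw [show x - (x - ε • y) = ε • y by abel, hterm y hy]
    exact_mod_cast hyt.le
  · refine le_iInf fun y' => ?_
    by_cases hy : f (ε⁻¹ • (x - y')) = 0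
    · have : scaleBase ε (convexBase β f) (x - y') = ⊤ := by
        simp only [scaleBase, convexBase, if_pos hy]
        exact EReal.coe_mul_top_of_pos hε
      rw [this]
      simp [gaussBase]
    · have e := hterm _ hy
      have e2 : ε • ε⁻¹ • (x - y') = x - y' := by
        rw [smul_smul, mul_inv_cancel₀ hε.ne', one_smul]
      rw [e2, sub_sub_cancel] at e
      rw [e]
      exact_mod_cast bblR_le hβ hε hf x _ hy
end

theorem stmt_15 {n : ℕ} (hn : 1 ≤ n) (α β κ : ℝ) (hα1 : -1 / (n : ℝ) < α) (hα2 : α < 0)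
    (hβ : β = -1 / α) (hκ : κ = α / (1 + n * α))
    (f : EuclideanSpace ℝ (Fin n) → ℝ) (hf : f ∈ CAlpha n α)
    (hfi : Integrable f) (hf0 : 0 < ∫ x, f x)
    (ε : ℝ) (hε0 : 0 < ε) (hε1 : ε < 1) :
    ∃ h : EuclideanSpace ℝ (Fin n) → ℝ, h ∈ CAlpha n α ∧
      (∀ x, convexBase β h x = infConv (gaussBase n) (scaleBase ε (convexBase β f)) x) ∧
      ENNReal.ofReal
          (((1 - ε) ^ (1 - κ * n / 2) *
              (∫ x : EuclideanSpace ℝ (Fin n), (1 + ‖x‖ ^ 2 / (2 * β)) ^ (-β)) ^ κ +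
            ε * (∫ x, f x) ^ κ) ^ (1 / κ)) ≤
        ∫⁻ x, ENNReal.ofReal (h x) := by
  have hn0 : (0:ℝ) < n := by exact_mod_cast hn
  have hβ0 : 0 < β := by rw [hβ]; exact div_pos_of_neg_of_neg (by norm_num) hα2
  have hna : 0 < 1 + n * α := by
    rw [div_lt_iff₀ hn0] at hα1; linarith
  have hκ0 : κ < 0 := by rw [hκ]; exact div_neg_of_neg_of_pos hα2 hna
  have hab : -1 / β = α := by rw [hβ]; field_simp
  have hαβ : -β = 1 / α := by rw [hβ]; ring
  have hβn : (n:ℝ) < β := by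
    rw [hβ, lt_div_iff_of_neg hα2]; linarith
  obtain ⟨hfnn, husc, hne, hconc⟩ := hf
  set r := bblR α β ε f with hr
  have hK : ∀ x, 0 < 1 + r x / β := by
    intro x
    have := bblR_lower (α := α) hβ0 hε0 hfnn hne x
    have h2 : -ε ≤ r x / β := by rw [le_div_iff₀ hβ0]; linarith
    linarith
  have hconv := bblR_convex hα2 hβ0 hε0 hfnn hne hconc
  have hcont : Continuous r := hconv.locallyLipschitz.continuous
  set h : EuclideanSpace ℝ (Fin n) → ℝ := fun x => (1 + r x / β) ^ (-β) with hh
  have hpos : ∀ x, 0 < h x := fun x => Real.rpow_pos_of_pos (hK x) _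
  have hhc : Continuous h := by
    refine Continuous.rpow_const (by fun_prop) fun x => Or.inl (hK x).ne'
  have hhα : ∀ x, h x ^ α = 1 + r x / β := by
    intro x
    simp only [hh]
    rw [← Real.rpow_mul (hK x).le, hαβ, one_div_mul_cancel hα2.ne, Real.rpow_one]
  refine ⟨h, ⟨fun x => (hpos x).le, hhc.upperSemicontinuous, ⟨0, (hpos 0).ne'⟩, ?_, ?_⟩, ?_, ?_⟩
  · have : {x | h x ≠ 0} = Set.univ := by ext x; simp [(hpos x).ne']
    rw [this]; exact convex_univ
  · intro x y _ _ l hl0 hl1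
    rw [hhα, hhα, ← hαβ]
    refine Real.rpow_le_rpow_of_nonpos (hK _) ?_ (by linarith)
    have := hconv.2 (Set.mem_univ x) (Set.mem_univ y) hl0 (sub_nonneg.2 hl1) (by ring)
    simp only [smul_eq_mul] at this
    have h2 : r (l • x + (1 - l) • y) / β ≤ (l * r x + (1 - l) * r y) / β := by gcongr
    calc _ ≤ 1 + (l * r x + (1 - l) * r y) / β := by linarith
      _ = _ := by ring
  · intro x
    rw [bbl_infConv hα2 hβ hβ0 hε0 hfnn hne x]
    simp only [convexBase, if_neg (hpos x).ne', hab, hhα]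
    congr 1
    field_simp
    simp [hr]
  · set G : EuclideanSpace ℝ (Fin n) → ℝ := fun x => (1 + ‖x‖ ^ 2 / (2 * β)) ^ (-β) with hG
    have hGp : ∀ x : EuclideanSpace ℝ (Fin n), 0 < 1 + ‖x‖ ^ 2 / (2 * β) := fun x => by positivity
    have hGpos : ∀ x, 0 < G x := fun x => Real.rpow_pos_of_pos (hGp x) _
    have hGc : Continuous G := Continuous.rpow_const (by fun_prop) fun x => Or.inl (hGp x).ne'
    have hGi : Integrable G := by
      have i1 := integrable_rpow_neg_one_add_norm_sq
        (E := EuclideanSpace ℝ (Fin n)) (μ := volume) (r := 2 * β) (by simp; linarith)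
      have hs : (√(2 * β))⁻¹ ≠ 0 := by positivity
      have i2 := i1.comp_smul hs
      refine i2.congr (ae_of_all _ fun x => ?_)
      simp only [hG]
      rw [norm_smul, mul_pow, norm_inv, inv_pow, Real.norm_of_nonneg (Real.sqrt_nonneg _),
        Real.sq_sqrt (by positivity)]
      congr 1
      · ring
      · ring
    have hI : 0 < ∫ x, G x := by
      rw [integral_pos_iff_support_of_nonneg (fun x => (hGpos x).le) hGi]
      have : Function.support G = Set.univ := by ext x; simp [(hGpos x).ne']
      rw [this]; exact isOpen_univ.measure_pos volume Set.univ_nonempty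
    have hε' : 0 < 1 - ε := by linarith
    set s := √(1 - ε) with hs
    have hs0 : 0 < s := Real.sqrt_pos.2 hε'
    have hs2 : s ^ 2 = 1 - ε := Real.sq_sqrt hε'.le
    have hG'i : Integrable fun x => G (s • x) := hGi.comp_smul hs0.ne'
    have hI' : ∫ x, G (s • x) = (s ^ n)⁻¹ * ∫ x, G x := by
      rw [Measure.integral_comp_smul]
      simp [abs_of_pos hs0]
    have key := bbl_E hε0 hε1 n α hα2 hna (fun x => ENNReal.ofReal (G (s • x)))
      (fun x => ENNReal.ofReal (f x)) (fun x => ENNReal.ofReal (h x))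
      (by fun_prop) husc.measurable.ennreal_ofReal hhc.measurable.ennreal_ofReal ?_
    · rw [← ofReal_integral_eq_lintegral_ofReal hG'i (ae_of_all _ fun x => (hGpos _).le),
        ← ofReal_integral_eq_lintegral_ofReal hfi (ae_of_all _ hfnn), ← hκ, hI',
        bblM_ofReal hε0 hε1 (by positivity) hf0] at key
      convert key using 4
      rw [Real.mul_rpow (by positivity) hI.le, ← mul_assoc]
      congr 1
      have : (s ^ n)⁻¹ = (1 - ε) ^ (-(n:ℝ) / 2) := by
        rw [hs, Real.sqrt_eq_rpow, ← Real.rpow_natCast, ← Real.rpow_mul hε'.le,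
          ← Real.rpow_neg hε'.le]
        congr 1; ring
      rw [this, ← Real.rpow_mul hε'.le, ← Real.rpow_one_add' hε'.le]
      · congr 1; ring
      · nlinarith
    · intro x y
      by_cases hy : f y = 0
      · simp [hy, bblM_zero_right hε0 hα2]
      have hfy : 0 < f y := lt_of_le_of_ne (hfnn y) (Ne.symm hy)
      rw [bblM_ofReal hε0 hε1 (hGpos _) hfy]
      apply ENNReal.ofReal_le_ofReal
      rw [← hαβ]
      refine Real.rpow_le_rpow_of_nonpos (hK _) ?_ (by linarith)
      have t := bblR_le (α := α) hβ0 hε0 hfnn ((1 - ε) • x + ε • y) y hy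
      have t2 : r ((1 - ε) • x + ε • y) / β ≤ bblT α β ε f ((1 - ε) • x + ε • y) y / β := by
        gcongr
      have e1 : G (s • x) ^ α = 1 + (1 - ε) * ‖x‖ ^ 2 / (2 * β) := by
        simp only [hG]
        rw [← Real.rpow_mul (hGp _).le, hαβ, one_div_mul_cancel hα2.ne, Real.rpow_one, norm_smul,
          mul_pow, Real.norm_of_nonneg hs0.le, hs2]
      rw [e1]
      refine (add_le_add_right t2 1).trans (le_of_eq ?_)
      unfold bblT
      rw [add_sub_cancel_right, norm_smul, Real.norm_of_nonneg hε'.le]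
      field_simp
      ring
end
end

section
/- Let n ≥ 1, −1/n < α < 0 (so β = −1/α > n), κ = α/(1 + nα), and let f ∈ C_α(ℝⁿ) be Lebesgue integrable with ∫f > 0. Then the α-mean width satisfies w_α(f) ≥ (∫ G_α) · [ n/2 + (1/κ)·( (∫f / ∫G_α)^κ − 1 ) ] (note κ < 0). -/
open scoped RealInnerProductSpace Topology ENNReal
open MeasureTheory Filter

noncomputable section

/-- The difference `∫ G_α ⋆_α (ε ·_α f) - ∫ G_α` appearing in the definition of the
`α`-mean width, where `G_α ⋆_α (ε ·_α f)` is the `α`-concave function whose convex base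
is `(base_α G_α) □ (ε-homothety of base_α f)`. -/
def widthDiff (n : ℕ) (β : ℝ) (f : EuclideanSpace ℝ (Fin n) → ℝ) (ε : ℝ) : EReal :=
  ((∫⁻ x, ENNReal.ofReal
      (ofBase β (infConv (gaussBase n) (scaleBase ε (convexBase β f))) x) : ℝ≥0∞) : EReal) -
    ((∫⁻ x : EuclideanSpace ℝ (Fin n),
      ENNReal.ofReal ((1 + ‖x‖ ^ 2 / (2 * β)) ^ (-β)) : ℝ≥0∞) : EReal)



lemma bm_add {S T R : Set ℝ} (hS : MeasurableSet S) (hT : MeasurableSet T)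
    (hS0 : S.Nonempty) (hT0 : T.Nonempty)
    (h : ∀ x ∈ S, ∀ y ∈ T, x + y ∈ R) : volume S + volume T ≤ volume R := by
  have key : ∀ K ⊆ S, IsCompact K → K.Nonempty → ∀ L ⊆ T, IsCompact L → L.Nonempty →
      volume K + volume L ≤ volume R := by
    intro K hKS hK hK0 L hLT hL hL0
    obtain ⟨a, haK, ha⟩ := hK.exists_isMaxOn hK0 continuousOn_id
    obtain ⟨b, hbL, hb⟩ := hL.exists_isMinOn hL0 continuousOn_id
    have e1 : volume ((fun x => x + b) '' K) = volume K := by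
      simp
    have e2 : volume ((fun x => a + x) '' L) = volume L := by
      simp
    have hd : AEDisjoint volume ((fun x => x + b) '' K) ((fun x => a + x) '' L) := by
      apply measure_mono_null (t := {a + b}) _ (by simp)
      rintro z ⟨⟨x, hx, rfl⟩, ⟨y, hy, hxy⟩⟩
      have h1 : x ≤ a := ha hx
      have h2 : b ≤ y := hb hy
      simp only [Set.mem_singleton_iff] at *
      linarith
    have hm : MeasurableSet ((fun x => a + x) '' L) :=
      (hL.image (by fun_prop)).measurableSet
    rw [← e1, ← e2, ← measure_union₀ hm.nullMeasurableSet hd]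
    apply measure_mono
    rintro z (⟨x, hx, rfl⟩ | ⟨y, hy, rfl⟩)
    · exact h _ (hKS hx) _ (hLT hbL)
    · exact h _ (hKS haK) _ (hLT hy)
  have key' : ∀ K ⊆ S, IsCompact K → ∀ L ⊆ T, IsCompact L →
      volume K + volume L ≤ volume R := by
    intro K hKS hK L hLT hL
    obtain ⟨s, hs⟩ := hS0
    obtain ⟨t, ht⟩ := hT0
    refine le_trans (add_le_add (measure_mono (Set.subset_insert s K))
      (measure_mono (Set.subset_insert t L))) ?_
    exact key _ (Set.insert_subset hs hKS) (hK.insert s) (Set.insert_nonempty _ _) _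
      (Set.insert_subset ht hLT) (hL.insert t) (Set.insert_nonempty _ _)
  have hA : ∀ K ⊆ S, IsCompact K → volume K + volume T ≤ volume R := by
    intro K hKS hK
    refine le_of_forall_lt fun r hr => ?_
    by_cases hr0 : r < volume K
    · exact hr0.trans_le (le_trans (by simp) (key' K hKS hK ∅ (by simp) (by simp)))
    push Not at hr0
    have hKt : volume K ≠ ⊤ := hK.measure_lt_top.ne
    obtain ⟨L, hLT, hL, hlt⟩ := hT.exists_lt_isCompact (μ := volume) (r := r - volume K)
      (ENNReal.sub_lt_of_lt_add hr0 (by rwa [add_comm] at hr))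
    have h3 : r < volume K + volume L := by
      rw [add_comm]; exact ENNReal.lt_add_of_sub_lt_right (Or.inr hKt) hlt
    exact h3.trans_le (key' K hKS hK L hLT hL)
  by_cases hTt : volume T = ⊤
  · have := hA ∅ (by simp) (by simp)
    simp [hTt] at this
    simp [this]
  refine le_of_forall_lt fun r hr => ?_
  by_cases hr0 : r < volume T
  · exact hr0.trans_le (le_trans (by simp) (hA ∅ (by simp) (by simp)))
  push Not at hr0
  obtain ⟨K, hKS, hK, hlt⟩ := hS.exists_lt_isCompact (μ := volume) (r := r - volume T)
    (ENNReal.sub_lt_of_lt_add hr0 hr)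
  have h3 : r < volume K + volume T := ENNReal.lt_add_of_sub_lt_right (Or.inr hTt) hlt
  exact h3.trans_le (hA K hKS hK)

lemma bm_one {S T R : Set ℝ} {l : ℝ} (h0 : 0 < l) (h1 : l < 1) (hS : MeasurableSet S)
    (hT : MeasurableSet T) (hS0 : S.Nonempty) (hT0 : T.Nonempty)
    (h : ∀ x ∈ S, ∀ y ∈ T, (1 - l) * x + l * y ∈ R) :
    ENNReal.ofReal (1 - l) * volume S + ENNReal.ofReal l * volume T ≤ volume R := by
  have hl : 0 < 1 - l := by linarith
  have e : ∀ c : ℝ, 0 < c → ∀ A : Set ℝ, ENNReal.ofReal c * volume A = volume ((fun x => c * x) '' A) := by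
    intro c hc A
    have := Measure.addHaar_smul (volume : Measure ℝ) c A
    rw [Module.finrank_self, pow_one, abs_of_pos hc] at this
    exact this.symm
  have m : ∀ c : ℝ, 0 < c → ∀ A : Set ℝ, MeasurableSet A → MeasurableSet ((fun x => c * x) '' A) := by
    intro c hc A hA
    exact (MeasurableEquiv.mulLeft₀ c hc.ne').measurableSet_image.2 hA
  rw [e _ hl, e _ h0]
  refine bm_add (m _ hl _ hS) (m _ h0 _ hT) (hS0.image _) (hT0.image _) ?_
  rintro _ ⟨x, hx, rfl⟩ _ ⟨y, hy, rfl⟩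
  exact h x hx y hy

lemma layer_lt (g : ℝ → ℝ≥0∞) (hg : Measurable g) (h1 : ∀ x, g x ≤ 1) :
    ∫⁻ x, g x ≤ ∫⁻ s in Set.Ioo (0:ℝ) 1, volume {x | ENNReal.ofReal s < g x} := by
  have ht : ∀ x, g x ≠ ⊤ := fun x => ((h1 x).trans_lt ENNReal.one_lt_top).ne
  have := lintegral_eq_lintegral_meas_lt (f := fun x => (g x).toReal) volume
    (Eventually.of_forall fun x => ENNReal.toReal_nonneg) hg.ennreal_toReal.aemeasurable
  simp only [ENNReal.ofReal_toReal (ht _)] at this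
  rw [this, ← Set.Ioo_union_Ici_eq_Ioi (zero_lt_one (α := ℝ))]
  refine (lintegral_union_le _ _ _).trans ?_
  have z : ∫⁻ t in Set.Ici (1:ℝ), volume {a | t < (g a).toReal} = 0 := by
    rw [← lintegral_zero (μ := volume.restrict (Set.Ici (1:ℝ)))]
    refine setLIntegral_congr_fun measurableSet_Ici fun t ht' => ?_
    have : {a | t < (g a).toReal} = ∅ := by
      ext a
      have := ENNReal.toReal_mono ENNReal.one_ne_top (h1 a)
      simp at this ht' ⊢
      linarith
    simp [this]
  rw [z, add_zero]
  refine setLIntegral_mono' measurableSet_Ioo fun s hs => measure_mono fun x hx => ?_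
  simp only [Set.mem_ofPred_eq] at hx ⊢
  exact (ENNReal.ofReal_lt_iff_lt_toReal hs.1.le (ht x)).2 hx

lemma layer_le (g : ℝ → ℝ≥0∞) (hg : Measurable g) :
    ∫⁻ s in Set.Ioo (0:ℝ) 1, volume {x | ENNReal.ofReal s ≤ g x} ≤ ∫⁻ x, g x := by
  have ht : ∀ x, min (g x) 1 ≠ ⊤ := fun x => ((min_le_right _ _).trans_lt ENNReal.one_lt_top).ne
  refine le_trans ?_ (lintegral_mono (fun x => min_le_left (g x) 1))
  have := lintegral_eq_lintegral_meas_le (f := fun x => (min (g x) 1).toReal) volume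
    (Eventually.of_forall fun x => ENNReal.toReal_nonneg)
    (hg.min measurable_const).ennreal_toReal.aemeasurable
  simp only [ENNReal.ofReal_toReal (ht _)] at this
  rw [this]
  refine le_trans ?_ (lintegral_mono_set (fun x hx => hx.1 : Set.Ioo (0:ℝ) 1 ⊆ Set.Ioi 0))
  refine setLIntegral_mono' measurableSet_Ioo fun s hs => measure_mono fun x hx => ?_
  simp only [Set.mem_ofPred_eq] at hx ⊢
  rw [← ENNReal.ofReal_le_iff_le_toReal (ht x)]
  refine le_min hx ?_
  simpa using hs.2.le

lemma real_ineq {l a b p q g : ℝ} (h0 : 0 < l) (h1 : l < 1) (ha : 0 < a) (hb : 0 < b)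
    (hp : 0 < p) (hq : 0 < q) (hg1 : -1 < g) (hg2 : g < 0) :
    (((1 - l) * a ^ g + l * b ^ g) ^ g⁻¹ * ((1 - l) * p + l * q)) ^ (g / (1 + g)) ≤
      (1 - l) * (a * p) ^ (g / (1 + g)) + l * (b * q) ^ (g / (1 + g)) := by
  have hl : 0 < 1 - l := by linarith
  have hgp : 0 < 1 + g := by linarith
  set s := 1 / (1 + g) with hs
  have hs1 : 1 ≤ s := by rw [hs, le_div_iff₀ hgp]; linarith
  have hk : g / (1 + g) = 1 - s := by rw [hs]; field_simp; ring
  have hk' : g / (1 + g) = g * s := by rw [hs]; field_simp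
  have hx := Real.rpow_pos_of_pos ha g
  have hy := Real.rpow_pos_of_pos hb g
  have E : ∀ x t : ℝ, 0 < x → 0 < t → x ^ s * t ^ (1 - s) = t * (x / t) ^ s := by
    intro x t hx ht
    rw [Real.rpow_sub ht, Real.div_rpow hx.le ht.le, Real.rpow_one]; ring
  have e1 : ∀ a p : ℝ, 0 < a → 0 < p → (a * p) ^ (g / (1 + g)) = p * (a ^ g / p) ^ s := by
    intro a p ha hp
    rw [← E _ _ (Real.rpow_pos_of_pos ha g) hp, Real.mul_rpow ha.le hp.le, hk, ← hk, hk',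
      Real.rpow_mul ha.le, ← hk', hk]
  have hX : 0 < (1 - l) * a ^ g + l * b ^ g := by positivity
  have hT : 0 < (1 - l) * p + l * q := by positivity
  rw [e1 _ _ (by positivity) hT, e1 _ _ ha hp, e1 _ _ hb hq, Real.rpow_inv_rpow hX.le hg2.ne]
  have J := @(convexOn_rpow hs1).2 (a ^ g / p)
    (Set.mem_Ici.2 (by positivity)) (b ^ g / q) (Set.mem_Ici.2 (by positivity))
    ((1 - l) * p / ((1 - l) * p + l * q)) (l * q / ((1 - l) * p + l * q))
    (by positivity) (by positivity) (by field_simp)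
  simp only [smul_eq_mul] at J
  have e2 : (1 - l) * p / ((1 - l) * p + l * q) * (a ^ g / p) +
      l * q / ((1 - l) * p + l * q) * (b ^ g / q) =
      ((1 - l) * a ^ g + l * b ^ g) / ((1 - l) * p + l * q) := by
    field_simp
  rw [e2] at J
  calc _ ≤ _ := mul_le_mul_of_nonneg_left J hT.le
    _ = _ := by field_simp

lemma rpow_anti {x y : ℝ≥0∞} {z : ℝ} (hz : z < 0) : x ^ z ≤ y ^ z ↔ y ≤ x := by
  obtain ⟨t, rfl⟩ : ∃ t, z = -t := ⟨-z, by ring⟩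
  rw [ENNReal.rpow_neg, ENNReal.rpow_neg, ENNReal.inv_le_inv,
    ENNReal.rpow_le_rpow_iff (by linarith)]




lemma enn_ineq {l g : ℝ} (h0 : 0 < l) (h1 : l < 1) (hg1 : -1 < g) (hg2 : g < 0)
    {a b : ℝ≥0∞} (ha : a ≠ 0) (ha' : a ≠ ⊤) (hb : b ≠ 0) (hb' : b ≠ ⊤) (p q : ℝ≥0∞) :
    ((ENNReal.ofReal (1 - l) * a ^ g + ENNReal.ofReal l * b ^ g) ^ g⁻¹ *
      (ENNReal.ofReal (1 - l) * p + ENNReal.ofReal l * q)) ^ (g / (1 + g)) ≤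
      ENNReal.ofReal (1 - l) * (a * p) ^ (g / (1 + g)) +
        ENNReal.ofReal l * (b * q) ^ (g / (1 + g)) := by
  have hl : 0 < 1 - l := by linarith
  have hk : g / (1 + g) < 0 := div_neg_of_neg_of_pos hg2 (by linarith)
  have ol : ENNReal.ofReal l ≠ 0 := by simpa using h0
  have ol' : ENNReal.ofReal (1 - l) ≠ 0 := by simpa using h1
  obtain ⟨a', hap, rfl⟩ : ∃ a' : ℝ, 0 < a' ∧ a = ENNReal.ofReal a' :=
    ⟨a.toReal, ENNReal.toReal_pos ha ha', (ENNReal.ofReal_toReal ha').symm⟩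
  obtain ⟨b', hbp, rfl⟩ : ∃ b' : ℝ, 0 < b' ∧ b = ENNReal.ofReal b' :=
    ⟨b.toReal, ENNReal.toReal_pos hb hb', (ENNReal.ofReal_toReal hb').symm⟩
  have hC : (ENNReal.ofReal (1 - l) * ENNReal.ofReal a' ^ g + ENNReal.ofReal l * ENNReal.ofReal b' ^ g)
      = ENNReal.ofReal ((1 - l) * a' ^ g + l * b' ^ g) := by
    rw [ENNReal.ofReal_rpow_of_pos hap, ENNReal.ofReal_rpow_of_pos hbp,
      ← ENNReal.ofReal_mul hl.le, ← ENNReal.ofReal_mul h0.le, ← ENNReal.ofReal_add (by positivity) (by positivity)]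
  have hCp : 0 < (1 - l) * a' ^ g + l * b' ^ g := by positivity
  rw [hC, ENNReal.ofReal_rpow_of_pos hCp]
  have hCp' : 0 < ((1 - l) * a' ^ g + l * b' ^ g) ^ g⁻¹ := by positivity
  by_cases hp0 : p = 0
  · simp [hp0, ENNReal.zero_rpow_of_neg hk, ENNReal.mul_top ol']
  by_cases hq0 : q = 0
  · simp [hq0, ENNReal.zero_rpow_of_neg hk, ENNReal.mul_top ol]
  by_cases hpt : p = ⊤
  · simp [hpt, ENNReal.mul_top, ol', hCp', ENNReal.top_rpow_of_neg hk]
  by_cases hqt : q = ⊤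
  · simp [hqt, ENNReal.mul_top, ol, hCp', ENNReal.top_rpow_of_neg hk]
  obtain ⟨p', hpp, rfl⟩ : ∃ b' : ℝ, 0 < b' ∧ p = ENNReal.ofReal b' :=
    ⟨p.toReal, ENNReal.toReal_pos hp0 hpt, (ENNReal.ofReal_toReal hpt).symm⟩
  obtain ⟨q', hqp, rfl⟩ : ∃ b' : ℝ, 0 < b' ∧ q = ENNReal.ofReal b' :=
    ⟨q.toReal, ENNReal.toReal_pos hq0 hqt, (ENNReal.ofReal_toReal hqt).symm⟩
  rw [← ENNReal.ofReal_mul hl.le, ← ENNReal.ofReal_mul h0.le, ← ENNReal.ofReal_add (by positivity) (by positivity),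
    ← ENNReal.ofReal_mul hCp'.le, ← ENNReal.ofReal_mul hap.le, ← ENNReal.ofReal_mul hbp.le,
    ENNReal.ofReal_rpow_of_pos (by positivity), ENNReal.ofReal_rpow_of_pos (by positivity),
    ENNReal.ofReal_rpow_of_pos (by positivity), ← ENNReal.ofReal_mul hl.le, ← ENNReal.ofReal_mul h0.le,
    ← ENNReal.ofReal_add (by positivity) (by positivity)]
  exact ENNReal.ofReal_le_ofReal (real_ineq h0 h1 hap hbp hpp hqp hg1 hg2)

lemma bbl1_bdd {l g : ℝ} (h0 : 0 < l) (h1 : l < 1) (hg1 : -1 < g) (hg2 : g < 0)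
    {u v w : ℝ → ℝ≥0∞} (hu : Measurable u) (hv : Measurable v) (hw : Measurable w)
    (hA : ⨆ x, u x ≠ ⊤) (hB : ⨆ x, v x ≠ ⊤)
    (h : ∀ x y, w ((1 - l) * x + l * y) ^ g ≤
      ENNReal.ofReal (1 - l) * u x ^ g + ENNReal.ofReal l * v y ^ g) :
    (∫⁻ x, w x) ^ (g / (1 + g)) ≤ ENNReal.ofReal (1 - l) * (∫⁻ x, u x) ^ (g / (1 + g)) +
      ENNReal.ofReal l * (∫⁻ x, v x) ^ (g / (1 + g)) := by
  have hl : 0 < 1 - l := by linarith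
  have hk : g / (1 + g) < 0 := div_neg_of_neg_of_pos hg2 (by linarith)
  have ol : ENNReal.ofReal l ≠ 0 := by simpa using h0
  have ol' : ENNReal.ofReal (1 - l) ≠ 0 := by simpa using h1
  set A := ⨆ x, u x with hAd
  set B := ⨆ x, v x with hBd
  have huA : ∀ x, u x ≤ A := fun x => le_iSup u x
  have hvB : ∀ x, v x ≤ B := fun x => le_iSup v x
  by_cases hA0 : A = 0
  · have : ∀ x, u x = 0 := fun x => le_antisymm (hA0 ▸ huA x) bot_le
    simp [this, ENNReal.zero_rpow_of_neg hk, ENNReal.mul_top ol']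
  by_cases hB0 : B = 0
  · have : ∀ x, v x = 0 := fun x => le_antisymm (hB0 ▸ hvB x) bot_le
    simp [this, ENNReal.zero_rpow_of_neg hk, ENNReal.mul_top ol]
  set D := ENNReal.ofReal (1 - l) * A ^ g + ENNReal.ofReal l * B ^ g with hD
  set C := D ^ g⁻¹ with hC
  have hAg : A ^ g ≠ ⊤ := ENNReal.rpow_ne_top_of_ne_zero hA0 hA
  have hBg : B ^ g ≠ ⊤ := ENNReal.rpow_ne_top_of_ne_zero hB0 hB
  have hDt : D ≠ ⊤ := ENNReal.add_ne_top.2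
    ⟨ENNReal.mul_ne_top ENNReal.ofReal_ne_top hAg, ENNReal.mul_ne_top ENNReal.ofReal_ne_top hBg⟩
  have hD0 : D ≠ 0 := by
    have : 0 < A ^ g := ENNReal.rpow_pos (pos_iff_ne_zero.2 hA0) hA
    simp [hD, ol', this.ne', hl]
  have hC0 : C ≠ 0 := (ENNReal.rpow_pos (pos_iff_ne_zero.2 hD0) hDt).ne'
  have hCt : C ≠ ⊤ := ENNReal.rpow_ne_top_of_ne_zero hD0 hDt
  have hCg : C ^ g = D := ENNReal.rpow_inv_rpow hg2.ne D
  have hineq : ENNReal.ofReal (1 - l) * (∫⁻ x, u x / A) + ENNReal.ofReal l * (∫⁻ x, v x / B)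
      ≤ ∫⁻ x, w x / C := by
    have d1 : ∀ x, u x / A ≤ 1 := fun x => ENNReal.div_le_of_le_mul (by simpa using huA x)
    have d2 : ∀ x, v x / B ≤ 1 := fun x => ENNReal.div_le_of_le_mul (by simpa using hvB x)
    have mu : Measurable fun x => u x / A := by fun_prop
    have mv : Measurable fun x => v x / B := by fun_prop
    refine le_trans ?_ (layer_le (fun x => w x / C) (by fun_prop))
    refine le_trans (add_le_add (mul_le_mul_right (layer_lt _ mu d1) _)
      (mul_le_mul_right (layer_lt _ mv d2) _)) ?_
    rw [← lintegral_const_mul' _ _ ENNReal.ofReal_ne_top,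
      ← lintegral_const_mul' _ _ ENNReal.ofReal_ne_top]
    refine (le_lintegral_add _ _).trans ?_
    refine setLIntegral_mono' measurableSet_Ioo fun s hs => ?_
    have hs0 : ENNReal.ofReal s ≠ 0 := by simpa using hs.1
    have ne : ∀ (A : ℝ≥0∞) (u : ℝ → ℝ≥0∞), A = ⨆ x, u x → A ≠ 0 → A ≠ ⊤ →
        {x | ENNReal.ofReal s < u x / A}.Nonempty := by
      intro A u hAd hA0 hA
      have : ENNReal.ofReal s * A < ⨆ x, u x := by
        rw [← hAd]
        calc _ < 1 * A := ENNReal.mul_lt_mul_left hA0 hA (by simpa using hs.2)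
          _ = A := one_mul A
      obtain ⟨x, hx⟩ := lt_iSup_iff.1 this
      exact ⟨x, (ENNReal.lt_div_iff_mul_lt (Or.inl hA0) (Or.inl hA)).2 hx⟩
    refine bm_one h0 h1 (measurableSet_lt measurable_const mu) (measurableSet_lt measurable_const mv)
      (ne A u hAd hA0 hA) (ne B v hBd hB0 hB) ?_
    intro x hx y hy
    have hx' : ENNReal.ofReal s * A ≤ u x :=
      ((ENNReal.lt_div_iff_mul_lt (Or.inl hA0) (Or.inl hA)).1 hx).le
    have hy' : ENNReal.ofReal s * B ≤ v y :=
      ((ENNReal.lt_div_iff_mul_lt (Or.inl hB0) (Or.inl hB)).1 hy).le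
    change ENNReal.ofReal s ≤ _
    rw [ENNReal.le_div_iff_mul_le (Or.inl hC0) (Or.inl hCt), ← rpow_anti hg2]
    refine (h x y).trans ?_
    rw [ENNReal.mul_rpow_of_ne_top ENNReal.ofReal_ne_top hCt, hCg, hD, mul_add]
    rw [← rpow_anti hg2, ENNReal.mul_rpow_of_ne_top ENNReal.ofReal_ne_top hA] at hx'
    rw [← rpow_anti hg2, ENNReal.mul_rpow_of_ne_top ENNReal.ofReal_ne_top hB] at hy'
    calc _ ≤ _ := add_le_add (mul_le_mul_right hx' _) (mul_le_mul_right hy' _)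
      _ = _ := by ring
  have e : ∀ (A : ℝ≥0∞) (u : ℝ → ℝ≥0∞), A ≠ 0 → A ≠ ⊤ → Measurable u → ∫⁻ x, u x = A * ∫⁻ x, u x / A := by
    intro A u hA0 hA hu
    rw [← lintegral_const_mul _ (by fun_prop)]
    simp_rw [ENNReal.mul_div_cancel hA0 hA]
  rw [e A u hA0 hA hu, e B v hB0 hB hv, e C w hC0 hCt hw]
  refine le_trans ?_ (enn_ineq h0 h1 hg1 hg2 hA0 hA hB0 hB _ _)
  rw [rpow_anti hk]
  gcongr

lemma bbl1 {l g : ℝ} (h0 : 0 < l) (h1 : l < 1) (hg1 : -1 < g) (hg2 : g < 0)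
    {u v w : ℝ → ℝ≥0∞} (hu : Measurable u) (hv : Measurable v) (hw : Measurable w)
    (h : ∀ x y, w ((1 - l) * x + l * y) ^ g ≤
      ENNReal.ofReal (1 - l) * u x ^ g + ENNReal.ofReal l * v y ^ g) :
    (∫⁻ x, w x) ^ (g / (1 + g)) ≤ ENNReal.ofReal (1 - l) * (∫⁻ x, u x) ^ (g / (1 + g)) +
      ENNReal.ofReal l * (∫⁻ x, v x) ^ (g / (1 + g)) := by
  have T : ∀ u : ℝ → ℝ≥0∞, Measurable u →
      Tendsto (fun m : ℕ => ∫⁻ x, min (u x) m) atTop (𝓝 (∫⁻ x, u x)) := by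
    intro u hu
    refine lintegral_tendsto_of_tendsto_of_monotone (fun m => (hu.min measurable_const).aemeasurable)
      (Eventually.of_forall fun x m m' hm => ?_) (Eventually.of_forall fun x => ?_)
    · exact min_le_min le_rfl (by exact_mod_cast hm)
    · have := (tendsto_const_nhds (x := u x) (f := atTop (α := ℕ))).min ENNReal.tendsto_nat_nhds_top
      simpa using this
  have S : ∀ u : ℝ → ℝ≥0∞, ∀ m : ℕ, ⨆ x, min (u x) m ≠ ⊤ := fun u m =>
    ((iSup_le fun x => min_le_right _ _).trans_lt (ENNReal.natCast_lt_top m)).ne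
  refine ge_of_tendsto' (x := atTop) (f := fun m : ℕ => ENNReal.ofReal (1 - l) * (∫⁻ x, min (u x) m) ^ (g / (1 + g)) +
      ENNReal.ofReal l * (∫⁻ x, min (v x) m) ^ (g / (1 + g))) ?_ fun m => ?_
  · refine Tendsto.add ?_ ?_
    · exact ENNReal.Tendsto.const_mul ((ENNReal.continuous_rpow_const.tendsto _).comp (T u hu)) (Or.inr ENNReal.ofReal_ne_top)
    · exact ENNReal.Tendsto.const_mul ((ENNReal.continuous_rpow_const.tendsto _).comp (T v hv)) (Or.inr ENNReal.ofReal_ne_top)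
  · refine bbl1_bdd h0 h1 hg1 hg2 (hu.min measurable_const) (hv.min measurable_const) hw (S u m) (S v m) ?_
    intro x y
    refine (h x y).trans ?_
    gcongr ?_ + ?_
    · exact mul_le_mul_right ((rpow_anti hg2).2 (min_le_left _ _)) _
    · exact mul_le_mul_right ((rpow_anti hg2).2 (min_le_left _ _)) _

lemma bbln (n : ℕ) {l α : ℝ} (h0 : 0 < l) (h1 : l < 1) (hα1 : 0 < 1 + n * α) (hα2 : α < 0)
    {u v w : (Fin n → ℝ) → ℝ≥0∞} (hu : Measurable u) (hv : Measurable v) (hw : Measurable w)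
    (h : ∀ x y, w ((1 - l) • x + l • y) ^ α ≤
      ENNReal.ofReal (1 - l) * u x ^ α + ENNReal.ofReal l * v y ^ α) :
    (∫⁻ x, w x) ^ (α / (1 + n * α)) ≤ ENNReal.ofReal (1 - l) * (∫⁻ x, u x) ^ (α / (1 + n * α)) +
      ENNReal.ofReal l * (∫⁻ x, v x) ^ (α / (1 + n * α)) := by
  induction n with
  | zero =>
    have hv : (volume : Measure (Fin 0 → ℝ)) = Measure.dirac 0 := Measure.volume_pi_eq_dirac _
    simpa [hv] using h 0 0
  | succ n ih =>
    have hn : 0 < 1 + n * α := by push_cast at hα1; nlinarith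
    set g := α / (1 + n * α) with hg
    have hg2 : g < 0 := div_neg_of_neg_of_pos hα2 hn
    have hg1 : -1 < g := by
      rw [hg, lt_div_iff₀ hn]; push_cast at hα1; linarith
    have hk : α / (1 + (n + 1 : ℕ) * α) = g / (1 + g) := by
      have : 1 + n * α + α ≠ 0 := by push_cast at hα1; intro h; linarith
      have h2 : 1 + (n + 1) * α ≠ 0 := by push_cast at hα1; intro h; linarith
      have h3 : 1 + g = (1 + n * α + α) / (1 + n * α) := by rw [hg, add_div, div_self hn.ne']
      rw [h3, hg, div_div_div_cancel_right₀ hn.ne']; push_cast; congr 1; ring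
    rw [hk]
    let e := (MeasurableEquiv.piFinSuccAbove (fun _ : Fin (n+1) => ℝ) 0).symm
    have he : MeasurePreserving e := (volume_preserving_piFinSuccAbove (fun _ : Fin (n+1) => ℝ) 0).symm _
    have F : ∀ u : (Fin (n+1) → ℝ) → ℝ≥0∞, Measurable u →
        ∫⁻ x, u x = ∫⁻ t : ℝ, ∫⁻ x : Fin n → ℝ, u (e (t, x)) := by
      intro u hu
      rw [← he.lintegral_comp hu, Measure.volume_eq_prod, lintegral_prod (fun a => u (e a)) (hu.comp e.measurable).aemeasurable]
    rw [F u hu, F v hv, F w hw]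
    have M : ∀ u : (Fin (n+1) → ℝ) → ℝ≥0∞, Measurable u → ∀ t, Measurable (fun x => u (e (t, x))) :=
      fun u hu t => hu.comp (e.measurable.comp measurable_prodMk_left)
    have M' : ∀ u : (Fin (n+1) → ℝ) → ℝ≥0∞, Measurable u →
        Measurable (fun t => ∫⁻ x : Fin n → ℝ, u (e (t, x))) :=
      fun u hu => (hu.comp e.measurable).lintegral_prod_right'
    refine bbl1 h0 h1 hg1 hg2 (M' u hu) (M' v hv) (M' w hw) fun s t => ?_
    refine ih hn (M u hu s) (M v hv t) (M w hw _) fun x y => ?_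
    refine le_trans (le_of_eq ?_) (h (e (s, x)) (e (t, y)))
    congr 2
    ext i
    refine Fin.cases ?_ (fun j => ?_) i
    · simp [e, MeasurableEquiv.piFinSuccAbove_symm_apply, Fin.insertNthEquiv]
    · simp [e, MeasurableEquiv.piFinSuccAbove_symm_apply, Fin.insertNthEquiv]

lemma bblE (n : ℕ) {l α : ℝ} (h0 : 0 < l) (h1 : l < 1) (hα1 : 0 < 1 + n * α) (hα2 : α < 0)
    {u v w : EuclideanSpace ℝ (Fin n) → ℝ≥0∞} (hu : Measurable u) (hv : Measurable v) (hw : Measurable w)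
    (h : ∀ x y, w ((1 - l) • x + l • y) ^ α ≤
      ENNReal.ofReal (1 - l) * u x ^ α + ENNReal.ofReal l * v y ^ α) :
    (∫⁻ x, w x) ^ (α / (1 + n * α)) ≤ ENNReal.ofReal (1 - l) * (∫⁻ x, u x) ^ (α / (1 + n * α)) +
      ENNReal.ofReal l * (∫⁻ x, v x) ^ (α / (1 + n * α)) := by
  have hp := PiLp.volume_preserving_toLp (Fin n)
  rw [← hp.lintegral_comp hu, ← hp.lintegral_comp hv, ← hp.lintegral_comp hw]
  refine bbln n h0 h1 hα1 hα2 (hu.comp hp.measurable) (hv.comp hp.measurable) (hw.comp hp.measurable) fun x y => ?_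
  exact h (WithLp.toLp 2 x) (WithLp.toLp 2 y)



lemma tangent {x κ : ℝ} (hx : 0 < x) (hκ : κ < 0) : 1 + κ * (x - 1) ≤ x ^ κ := by
  have h1 := Real.log_le_sub_one_of_pos hx
  have h2 := Real.add_one_le_exp (Real.log x * κ)
  rw [Real.rpow_def_of_pos hx]
  nlinarith

lemma limit_part {κ I0 R' : ℝ} (hκ : κ < 0) (hI0 : 0 < I0) (I : ℝ → ℝ≥0∞) (R : ℝ → ℝ)
    (H1 : ∀ δ l : ℝ, 0 < δ → δ < 1 → 0 < l → l < 1 → I (l * δ) ^ κ ≤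
      ENNReal.ofReal (1 - l) * ENNReal.ofReal I0 ^ κ + ENNReal.ofReal l * I δ ^ κ)
    (H2 : ∀ ε : ℝ, 0 < ε → ε < 1 → I ε ^ κ ≤ ENNReal.ofReal (R ε))
    (hRp : ∀ ε : ℝ, 0 < ε → ε < 1 → 0 ≤ R ε)
    (hR0 : R 0 = I0 ^ κ) (hR : HasDerivWithinAt R R' (Set.Ioi 0) 0) :
    ∃ L : EReal, Tendsto (fun ε : ℝ => ((ε⁻¹ : ℝ) : EReal) *
        ((I ε : EReal) - ((ENNReal.ofReal I0 : ℝ≥0∞) : EReal))) (𝓝[>] 0) (𝓝 L) ∧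
      ((I0 ^ (1 - κ) / κ * R' : ℝ) : EReal) ≤ L := by
  set J0 := I0 ^ κ with hJ0
  have hJ0p : 0 < J0 := by positivity
  set J : ℝ → ℝ := fun ε => (I ε ^ κ).toReal with hJ
  set q : ℝ → ℝ := fun ε => (J ε - J0) / ε with hq
  set c := I0 ^ (1 - κ) / κ with hc
  have hcn : c < 0 := div_neg_of_pos_of_neg (by positivity) hκ
  have hc' : c * J0 = I0 / κ := by
    rw [hc, hJ0, Real.rpow_sub hI0, Real.rpow_one]; field_simp
  have hfin : ∀ ε : ℝ, 0 < ε → ε < 1 → I ε ^ κ ≠ ⊤ := fun ε h h' =>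
    ((H2 ε h h').trans_lt ENNReal.ofReal_lt_top).ne
  have hJR : ∀ ε : ℝ, 0 < ε → ε < 1 → J ε ≤ R ε := fun ε h h' =>
    ENNReal.toReal_le_of_le_ofReal (hRp ε h h') (H2 ε h h')
  have hconv : ∀ δ l : ℝ, 0 < δ → δ < 1 → 0 < l → l < 1 → J (l * δ) ≤ (1 - l) * J0 + l * J δ := by
    intro δ l h1 h2 h3 h4
    have hl : 0 < 1 - l := by linarith
    have := H1 δ l h1 h2 h3 h4
    rw [← ENNReal.ofReal_toReal (hfin δ h1 h2), ENNReal.ofReal_rpow_of_pos hI0,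
      ← ENNReal.ofReal_mul hl.le, ← ENNReal.ofReal_mul h3.le, ← ENNReal.ofReal_add (by positivity) (by positivity)] at this
    exact ENNReal.toReal_le_of_le_ofReal (by positivity) this
  have hmono : MonotoneOn q (Set.Ioo 0 1) := by
    intro a ha b hb hab
    rcases hab.eq_or_lt with rfl | hab
    · exact le_rfl
    have h := hconv b (a / b) hb.1 hb.2 (div_pos ha.1 hb.1) ((div_lt_one hb.1).2 hab)
    rw [div_mul_cancel₀ _ hb.1.ne'] at h
    simp only [hq]
    rw [div_le_iff₀ ha.1]
    calc J a - J0 ≤ (1 - a / b) * J0 + a / b * J b - J0 := by linarith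
      _ = _ := by field_simp; ring
  have hev : ∀ᶠ ε : ℝ in 𝓝[>] 0, ε ∈ Set.Ioo (0:ℝ) 1 := Ioo_mem_nhdsGT one_pos
  obtain ⟨σ, hσ⟩ : ∃ σ : EReal, Tendsto (fun ε => (q ε : EReal)) (𝓝[>] 0) (𝓝 σ) := by
    have : MonotoneOn (fun ε => (q ε : EReal)) (Set.Ioo 0 1) := fun a ha b hb hab =>
      EReal.coe_le_coe_iff.2 (hmono ha hb hab)
    exact ⟨_, this.tendsto_nhdsWithin_Ioo_right ⟨1/2, by norm_num⟩ (OrderBot.bddBelow _)⟩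
  have hRs : Tendsto (fun ε => (R ε - J0) / ε) (𝓝[>] 0) (𝓝 R') := by
    rw [hasDerivWithinAt_iff_tendsto_slope' (by simp)] at hR
    refine hR.congr fun ε => ?_
    simp [slope_def_field, hR0]
  have hσR : σ ≤ (R' : EReal) := by
    refine le_of_tendsto_of_tendsto hσ ((continuous_coe_real_ereal.tendsto _).comp hRs) ?_
    filter_upwards [hev] with ε hε
    refine EReal.coe_le_coe_iff.2 ?_
    simp only [hq]
    have := hJR ε hε.1 hε.2
    have := hε.1
    gcongr
  have hIJ : ∀ ε : ℝ, 0 < ε → ε < 1 → I ε ≠ ⊤ → 0 < J ε ∧ I ε = ENNReal.ofReal (J ε ^ κ⁻¹) := by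
    intro ε h h' ht
    have hz : I ε ≠ 0 := fun h0 => hfin ε h h' (by rw [h0, ENNReal.zero_rpow_of_neg hκ])
    have hp : 0 < J ε := ENNReal.toReal_pos (ENNReal.rpow_pos (pos_iff_ne_zero.2 hz) ht).ne' (hfin ε h h')
    refine ⟨hp, ?_⟩
    rw [← ENNReal.ofReal_rpow_of_pos hp, ENNReal.ofReal_toReal (hfin ε h h'), ENNReal.rpow_rpow_inv hκ.ne]
  have hval : ∀ ε i : ℝ, 0 < i → I ε = ENNReal.ofReal i → ((ε⁻¹ : ℝ) : EReal) *
        ((I ε : EReal) - ((ENNReal.ofReal I0 : ℝ≥0∞) : EReal)) = (((i - I0) / ε : ℝ) : EReal) := by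
    intro ε i hi h
    rw [h, EReal.coe_ennreal_ofReal, EReal.coe_ennreal_ofReal, max_eq_left hi.le, max_eq_left hI0.le,
      ← EReal.coe_sub, ← EReal.coe_mul, div_eq_inv_mul]
  induction σ with
  | top => simp at hσR
  | bot =>
    refine ⟨⊤, ?_, le_top⟩
    have hq' : Tendsto q (𝓝[>] 0) atBot := EReal.tendsto_coe_nhds_bot_iff.1 hσ
    have h1 : Tendsto (fun ε => c * q ε) (𝓝[>] 0) atTop := hq'.const_mul_atBot_of_neg hcn
    have h2 : Tendsto (fun ε => ((c * q ε : ℝ) : EReal)) (𝓝[>] 0) (𝓝 ⊤) := EReal.tendsto_coe_nhds_top_iff.2 h1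
    refine tendsto_nhds_top_mono h2 ?_
    filter_upwards [hev] with ε hε
    by_cases ht : I ε = ⊤
    · rw [ht, EReal.coe_ennreal_ofReal, EReal.coe_ennreal_top, max_eq_left hI0.le, EReal.top_sub_coe,
        EReal.coe_mul_top_of_pos (inv_pos.2 hε.1)]
      exact le_top
    obtain ⟨hJp, hI⟩ := hIJ ε hε.1 hε.2 ht
    have hip : 0 < J ε ^ κ⁻¹ := by positivity
    rw [hval ε _ hip hI, EReal.coe_le_coe_iff]
    have ht := tangent (x := J ε ^ κ⁻¹ / I0) (by positivity) hκ
    rw [Real.div_rpow hip.le hI0.le, Real.rpow_inv_rpow hJp.le hκ.ne, ← hJ0, le_div_iff₀ hJ0p] at ht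
    simp only [hq]
    rw [← mul_div_assoc]
    have := hε.1
    gcongr
    have h5 : c * (J ε - J0) ≤ c * ((1 + κ * (J ε ^ κ⁻¹ / I0 - 1)) * J0 - J0) :=
      mul_le_mul_of_nonpos_left (by linarith) hcn.le
    refine h5.trans (le_of_eq ?_)
    calc _ = (c * J0) * (κ * (J ε ^ κ⁻¹ / I0 - 1)) := by ring
      _ = _ := by rw [hc']; have := hκ.ne; field_simp
  | coe σ =>
    have hσ' : Tendsto q (𝓝[>] 0) (𝓝 σ) := EReal.tendsto_coe.1 hσ
    set K := Function.update J 0 J0 with hK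
    have hK0 : K 0 = J0 := by simp [hK]
    have hKe : ∀ ε : ℝ, 0 < ε → K ε = J ε := fun ε h => by simp [hK, h.ne']
    have hKd : HasDerivWithinAt K σ (Set.Ioi 0) 0 := by
      rw [hasDerivWithinAt_iff_tendsto_slope' (by simp)]
      refine hσ'.congr' ?_
      filter_upwards [hev] with ε hε
      simp [slope_def_field, hK0, hKe ε hε.1, hq]
    have hKr := hKd.rpow_const (p := κ⁻¹) (Or.inl (by rw [hK0]; exact hJ0p.ne'))
    have hcd : σ * κ⁻¹ * K 0 ^ (κ⁻¹ - 1) = c * σ := by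
      rw [hK0, hJ0, ← Real.rpow_mul hI0.le, hc]
      have : κ * (κ⁻¹ - 1) = 1 - κ := by have := hκ.ne; field_simp
      rw [this]; field_simp
    rw [hcd] at hKr
    refine ⟨((c * σ : ℝ) : EReal), ?_, ?_⟩
    · have hcont := hKd.continuousWithinAt
      have hpos : ∀ᶠ ε in 𝓝[>] 0, 0 < K ε :=
        hcont.eventually (by rw [hK0]; exact lt_mem_nhds hJ0p)
      rw [hasDerivWithinAt_iff_tendsto_slope' (by simp)] at hKr
      refine ((continuous_coe_real_ereal.tendsto _).comp hKr).congr' ?_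
      filter_upwards [hev, hpos] with ε hε hp
      rw [hKe ε hε.1] at hp
      have ht : I ε ≠ ⊤ := by
        intro ht
        simp [hJ, ht, ENNReal.top_rpow_of_neg hκ] at hp
      obtain ⟨hJp, hI⟩ := hIJ ε hε.1 hε.2 ht
      rw [hval ε _ (by positivity) hI]
      simp [slope_def_field, hK0, hKe ε hε.1, hJ0, Real.rpow_rpow_inv hI0.le hκ.ne]
    · rw [EReal.coe_le_coe_iff]
      exact mul_le_mul_of_nonpos_left (EReal.coe_le_coe_iff.1 hσR) hcn.le


lemma base_char {n : ℕ} {β ε : ℝ} (hβ : 0 < β) (hε : 0 < ε)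
    {f : EuclideanSpace ℝ (Fin n) → ℝ} (hf : ∀ x, 0 ≤ f x) (hne : ∃ x, f x ≠ 0) :
    ∃ r : EuclideanSpace ℝ (Fin n) → ℝ,
      (∀ x, ofBase β (infConv (gaussBase n) (scaleBase ε (convexBase β f))) x
        = (1 + r x / β) ^ (-β)) ∧
      (∀ x, -(ε * β) ≤ r x) ∧
      (∀ x p, f p ≠ 0 → r x ≤ ‖x - ε • p‖ ^ 2 / 2 + ε * (β * (f p ^ (-1 / β) - 1))) ∧
      (∀ x c, (∀ p, f p ≠ 0 → c ≤ ‖x - ε • p‖ ^ 2 / 2 + ε * (β * (f p ^ (-1 / β) - 1))) →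
        c ≤ r x) := by
  set Φ := infConv (gaussBase n) (scaleBase ε (convexBase β f)) with hΦ
  have term : ∀ x p, f p ≠ 0 → gaussBase n (x - ε • p) + scaleBase ε (convexBase β f) (x - (x - ε • p))
      = ((‖x - ε • p‖ ^ 2 / 2 + ε * (β * (f p ^ (-1 / β) - 1)) : ℝ) : EReal) := by
    intro x p hp
    simp only [gaussBase, scaleBase, convexBase, sub_sub_cancel, smul_smul,
      inv_mul_cancel₀ hε.ne', one_smul, if_neg hp]
    rw [← EReal.coe_mul, ← EReal.coe_add]
  have up : ∀ x p, f p ≠ 0 → Φ x ≤ ((‖x - ε • p‖ ^ 2 / 2 + ε * (β * (f p ^ (-1 / β) - 1)) : ℝ) : EReal) := by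
    intro x p hp
    rw [← term x p hp]
    exact iInf_le (fun y => gaussBase n y + scaleBase ε (convexBase β f) (x - y)) (x - ε • p)
  have low : ∀ x (c : ℝ), (∀ p, f p ≠ 0 → c ≤ ‖x - ε • p‖ ^ 2 / 2 + ε * (β * (f p ^ (-1 / β) - 1))) →
      (c : EReal) ≤ Φ x := by
    intro x c hc
    refine le_iInf fun y => ?_
    obtain ⟨p, hp⟩ : ∃ p, y = x - ε • p := ⟨ε⁻¹ • (x - y), by rw [smul_smul, mul_inv_cancel₀ hε.ne']; simp⟩
    subst hp
    by_cases h0 : f p = 0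
    · have : scaleBase ε (convexBase β f) (x - (x - ε • p)) = ⊤ := by
        simp only [scaleBase, convexBase, sub_sub_cancel, smul_smul,
          inv_mul_cancel₀ hε.ne', one_smul, if_pos h0]
        exact EReal.coe_mul_top_of_pos hε
      rw [this]
      simp [gaussBase]
    · rw [term x p h0]
      exact EReal.coe_le_coe_iff.2 (hc p h0)
  have lowβ : ∀ x, ((-(ε * β) : ℝ) : EReal) ≤ Φ x := by
    intro x
    refine low x _ fun p hp => ?_
    have h1 : 0 ≤ f p ^ (-1 / β) := Real.rpow_nonneg (hf p) _
    have h2 : 0 ≤ ‖x - ε • p‖ ^ 2 / 2 := by positivity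
    have h3 : 0 ≤ ε * β * f p ^ (-1 / β) := by positivity
    nlinarith
  obtain ⟨p0, hp0⟩ := hne
  have ht : ∀ x, Φ x ≠ ⊤ := fun x => ((up x p0 hp0).trans_lt (EReal.coe_lt_top _)).ne
  have hb : ∀ x, Φ x ≠ ⊥ := fun x => ((EReal.bot_lt_coe _).trans_le (lowβ x)).ne'
  have hr : ∀ x, ((Φ x).toReal : EReal) = Φ x := fun x => EReal.coe_toReal (ht x) (hb x)
  refine ⟨fun x => (Φ x).toReal, fun x => ?_, fun x => ?_, fun x p hp => ?_, fun x c hc => ?_⟩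
  · simp [ofBase, ht x]
  · rw [← EReal.coe_le_coe_iff, hr]; exact lowβ x
  · rw [← EReal.coe_le_coe_iff, hr]; exact up x p hp
  · rw [← EReal.coe_le_coe_iff, hr]; exact low x c hc

lemma base_meas {n : ℕ} {β ε : ℝ} 
    {f : EuclideanSpace ℝ (Fin n) → ℝ} {r : EuclideanSpace ℝ (Fin n) → ℝ}
    (h1 : ∀ x p, f p ≠ 0 → r x ≤ ‖x - ε • p‖ ^ 2 / 2 + ε * (β * (f p ^ (-1 / β) - 1)))
    (h2 : ∀ x c, (∀ p, f p ≠ 0 → c ≤ ‖x - ε • p‖ ^ 2 / 2 + ε * (β * (f p ^ (-1 / β) - 1))) →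
        c ≤ r x) : Measurable r := by
  refine measurable_of_Iio fun c => IsOpen.measurableSet ?_
  have : r ⁻¹' Set.Iio c = ⋃ p ∈ {p | f p ≠ 0},
      {x | ‖x - ε • p‖ ^ 2 / 2 + ε * (β * (f p ^ (-1 / β) - 1)) < c} := by
    ext x
    simp only [Set.mem_preimage, Set.mem_Iio, Set.mem_iUnion]
    constructor
    · intro h
      by_contra hcon
      push Not at hcon
      exact absurd (h2 x c fun p hp => not_lt.1 (hcon p hp)) (not_le.2 h)
    · rintro ⟨p, hp, hx⟩
      exact (h1 x p hp).trans_lt hx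
  rw [this]
  refine isOpen_biUnion fun p _ => ?_
  exact isOpen_lt (by fun_prop) continuous_const

lemma gauss_int {n : ℕ} {β : ℝ} (hβ : (n : ℝ) < β) (hn : 1 ≤ n) :
    Integrable (fun x : EuclideanSpace ℝ (Fin n) => (1 + ‖x‖ ^ 2 / (2 * β)) ^ (-β)) := by
  have hb : 0 < β := lt_of_le_of_lt (Nat.cast_nonneg n) hβ
  have h := integrable_rpow_neg_one_add_norm_sq (E := EuclideanSpace ℝ (Fin n)) (μ := volume) (r := 2 * β)
    (by simp; linarith)
  have hs : 0 < (Real.sqrt (2 * β))⁻¹ := by positivity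
  have h2 := h.comp_smul hs.ne'
  refine h2.congr (Eventually.of_forall fun x => ?_)
  simp only [norm_smul, mul_pow]
  rw [Real.norm_of_nonneg hs.le, inv_pow, Real.sq_sqrt (by positivity)]
  congr 1
  · ring
  · ring

lemma norm_cvx {n : ℕ} (x y : EuclideanSpace ℝ (Fin n)) {l : ℝ} (h0 : 0 < l) (h1 : l < 1) :
    ‖(1 - l) • x + l • y‖ ^ 2 ≤ (1 - l) * ‖x‖ ^ 2 + l * ‖y‖ ^ 2 := by
  have hl : 0 < 1 - l := by linarith
  have := norm_add_le ((1 - l) • x) (l • y)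
  rw [norm_smul, norm_smul, Real.norm_of_nonneg hl.le, Real.norm_of_nonneg h0.le] at this
  have h2 : ‖(1 - l) • x + l • y‖ ^ 2 ≤ ((1 - l) * ‖x‖ + l * ‖y‖) ^ 2 :=
    pow_le_pow_left₀ (norm_nonneg _) this 2
  refine h2.trans ?_
  nlinarith [mul_nonneg (mul_nonneg hl.le h0.le) (sq_nonneg (‖x‖ - ‖y‖))]

lemma ofReal_base {β t : ℝ} (hβ : 0 < β) (ht : 0 < t) :
    ENNReal.ofReal (t ^ (-β)) ^ (-1 / β) = ENNReal.ofReal t := by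
  rw [ENNReal.ofReal_rpow_of_pos (by positivity), ← Real.rpow_mul ht.le]
  congr 1
  have : -β * (-1 / β) = 1 := by field_simp
  rw [this, Real.rpow_one]


theorem stmt_16 {n : ℕ} (hn : 1 ≤ n) (α β κ : ℝ) (hα1 : -1 / (n : ℝ) < α) (hα2 : α < 0)
    (hβ : β = -1 / α) (hκ : κ = α / (1 + n * α))
    (f : EuclideanSpace ℝ (Fin n) → ℝ) (hf : f ∈ CAlpha n α)
    (hfi : Integrable f) (hf0 : 0 < ∫ x, f x) :
    ∃ L : EReal,
      Tendsto (fun ε : ℝ => ((ε⁻¹ : ℝ) : EReal) * widthDiff n β f ε) (𝓝[>] 0) (𝓝 L) ∧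
      (((∫ x : EuclideanSpace ℝ (Fin n), (1 + ‖x‖ ^ 2 / (2 * β)) ^ (-β)) *
          ((n : ℝ) / 2 + (1 / κ) *
            (((∫ x, f x) / ∫ x : EuclideanSpace ℝ (Fin n), (1 + ‖x‖ ^ 2 / (2 * β)) ^ (-β)) ^ κ
              - 1)) : ℝ) : EReal) ≤ L := by
  have hb : 0 < β := by rw [hβ]; exact div_pos_of_neg_of_neg (by norm_num) hα2
  have hαβ : -1 / β = α := by rw [hβ]; have := hα2.ne; field_simp
  have hn0 : (0 : ℝ) < n := by exact_mod_cast hn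
  have h1n : 0 < 1 + n * α := by
    rw [div_lt_iff₀ hn0] at hα1; linarith
  have hnβ : (n : ℝ) < β := by
    rw [hβ, lt_div_iff_of_neg hα2]; linarith
  have hκn : κ < 0 := by rw [hκ]; exact div_neg_of_neg_of_pos hα2 h1n
  obtain ⟨hfnn, hfu, hfne, -⟩ := hf
  have hfm : Measurable f := hfu.measurable
  have hGi := gauss_int (n := n) hnβ hn
  have hGp : ∀ x : EuclideanSpace ℝ (Fin n), 0 < (1 + ‖x‖ ^ 2 / (2 * β)) ^ (-β) := fun x => by positivity
  set I0 := ∫ x : EuclideanSpace ℝ (Fin n), (1 + ‖x‖ ^ 2 / (2 * β)) ^ (-β) with hI0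
  set If := ∫ x, f x with hIf
  have hI0p : 0 < I0 := by
    rw [hI0, integral_pos_iff_support_of_nonneg (fun x => (hGp x).le) hGi]
    have : Function.support (fun x : EuclideanSpace ℝ (Fin n) => (1 + ‖x‖ ^ 2 / (2 * β)) ^ (-β)) = Set.univ := by
      ext x; simpa using (hGp x).ne'
    rw [this]
    exact isOpen_univ.measure_pos volume Set.univ_nonempty
  have hG0 : ∫⁻ x : EuclideanSpace ℝ (Fin n), ENNReal.ofReal ((1 + ‖x‖ ^ 2 / (2 * β)) ^ (-β)) = ENNReal.ofReal I0 :=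
    (ofReal_integral_eq_lintegral_ofReal hGi (Eventually.of_forall fun x => (hGp x).le)).symm
  have hF0 : ∫⁻ x, ENNReal.ofReal (f x) = ENNReal.ofReal If :=
    (ofReal_integral_eq_lintegral_ofReal hfi (Eventually.of_forall hfnn)).symm
  set I : ℝ → ℝ≥0∞ := fun ε => ∫⁻ x, ENNReal.ofReal
      (ofBase β (infConv (gaussBase n) (scaleBase ε (convexBase β f))) x) with hI
  set R : ℝ → ℝ := fun ε => (1 - ε) ^ (1 - n * κ / 2) * I0 ^ κ + ε * If ^ κ with hR
  have gm : ∀ s : ℝ, Measurable fun x : EuclideanSpace ℝ (Fin n) =>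
      ENNReal.ofReal ((1 + s * (‖x‖ ^ 2 / (2 * β))) ^ (-β)) := fun s => by fun_prop
  have H1 : ∀ δ l : ℝ, 0 < δ → δ < 1 → 0 < l → l < 1 → I (l * δ) ^ κ ≤
      ENNReal.ofReal (1 - l) * ENNReal.ofReal I0 ^ κ + ENNReal.ofReal l * I δ ^ κ := by
    intro δ l hδ hδ1 h0 h1
    have hl : 0 < 1 - l := by linarith
    have hlδ : l * δ < 1 := by nlinarith
    obtain ⟨r, r1, r2, r3, r4⟩ := base_char hb hδ hfnn hfne
    obtain ⟨s, s1, s2, s3, s4⟩ := base_char hb (mul_pos h0 hδ) hfnn hfne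
    simp only [hI, r1, s1]
    have mr := base_meas r3 r4
    have ms := base_meas s3 s4
    have pos : ∀ t e : ℝ, e < 1 → -(e * β) ≤ t → 0 < 1 + t / β := by
      intro t e he ht
      have : 1 + t / β = (β + t) / β := by field_simp
      rw [this]; exact div_pos (by nlinarith) hb
    rw [← hG0, hκ]
    refine bblE n h0 h1 h1n hα2 (by simpa using gm 1) (by fun_prop) (by fun_prop) fun x y => ?_
    have px : 0 < 1 + ‖x‖ ^ 2 / (2 * β) := by positivity
    have py := pos _ _ hδ1 (r2 y)
    have pz := pos _ _ hlδ (s2 ((1 - l) • x + l • y))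
    rw [← hαβ, ofReal_base hb px, ofReal_base hb py, ofReal_base hb pz, ← ENNReal.ofReal_mul hl.le,
      ← ENNReal.ofReal_mul h0.le, ← ENNReal.ofReal_add (by positivity) (by positivity)]
    refine ENNReal.ofReal_le_ofReal ?_
    have key : (s ((1 - l) • x + l • y) - (1 - l) * (‖x‖ ^ 2 / 2)) / l ≤ r y := by
      refine r4 y _ fun p hp => ?_
      rw [div_le_iff₀ h0]
      have a1 := s3 ((1 - l) • x + l • y) p hp
      have a2 := norm_cvx x (y - δ • p) h0 h1
      have a3 : (1 - l) • x + l • y - (l * δ) • p = (1 - l) • x + l • (y - δ • p) := by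
        rw [smul_sub, smul_smul]; abel
      rw [a3] at a1
      nlinarith
    rw [div_le_iff₀ h0] at key
    have e : (1 - l) * (1 + ‖x‖ ^ 2 / (2 * β)) + l * (1 + r y / β) =
      1 + ((1 - l) * (‖x‖ ^ 2 / 2) + r y * l) / β := by field_simp; ring
    rw [e]
    gcongr
    linarith
  have H2 : ∀ ε : ℝ, 0 < ε → ε < 1 → I ε ^ κ ≤ ENNReal.ofReal (R ε) := by
    intro ε h0 h1
    have hl : 0 < 1 - ε := by linarith
    obtain ⟨r, r1, r2, r3, r4⟩ := base_char hb h0 hfnn hfne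
    have mr := base_meas r3 r4
    have hF : ∫⁻ x : EuclideanSpace ℝ (Fin n), ENNReal.ofReal ((1 + (1 - ε) * (‖x‖ ^ 2 / (2 * β))) ^ (-β))
        = ENNReal.ofReal ((1 - ε) ^ (-(n : ℝ) / 2) * I0) := by
      have hs : 0 < Real.sqrt (1 - ε) := by positivity
      have ee : ∀ x : EuclideanSpace ℝ (Fin n), (1 + (1 - ε) * (‖x‖ ^ 2 / (2 * β))) ^ (-β) =
          (fun x : EuclideanSpace ℝ (Fin n) => (1 + ‖x‖ ^ 2 / (2 * β)) ^ (-β)) (Real.sqrt (1 - ε) • x) := by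
        intro x
        simp only [norm_smul, mul_pow]
        rw [Real.norm_of_nonneg hs.le, Real.sq_sqrt hl.le, mul_div_assoc]
      simp_rw [ee]
      rw [← ofReal_integral_eq_lintegral_ofReal (hGi.comp_smul hs.ne') (Eventually.of_forall fun x => (hGp _).le),
        Measure.integral_comp_smul volume (fun x : EuclideanSpace ℝ (Fin n) => (1 + ‖x‖ ^ 2 / (2 * β)) ^ (-β)) (Real.sqrt (1 - ε))]
      congr 1
      rw [← hI0, smul_eq_mul, finrank_euclideanSpace_fin, abs_of_pos (by positivity), Real.sqrt_eq_rpow,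
        ← Real.rpow_natCast, ← Real.rpow_mul hl.le, ← Real.rpow_neg hl.le]
      congr 2
      ring
    have hRε : ENNReal.ofReal (R ε) = ENNReal.ofReal (1 - ε) *
        (∫⁻ x : EuclideanSpace ℝ (Fin n), ENNReal.ofReal ((1 + (1 - ε) * (‖x‖ ^ 2 / (2 * β))) ^ (-β))) ^ κ
        + ENNReal.ofReal ε * (∫⁻ x, ENNReal.ofReal (f x)) ^ κ := by
      rw [hF, hF0, ENNReal.ofReal_rpow_of_pos (by positivity), ENNReal.ofReal_rpow_of_pos hf0,
        ← ENNReal.ofReal_mul hl.le, ← ENNReal.ofReal_mul h0.le, ← ENNReal.ofReal_add (by positivity) (by positivity)]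
      congr 1
      simp only [hR]
      rw [Real.mul_rpow (by positivity) hI0p.le, ← Real.rpow_mul hl.le, ← mul_assoc]
      congr 2
      rw [show 1 - n * κ / 2 = 1 + -(n : ℝ) / 2 * κ by ring, Real.rpow_add hl, Real.rpow_one]
    rw [hRε, hκ]
    simp only [hI, r1]
    refine bblE n h0 h1 h1n hα2 (gm _) (by fun_prop) (by fun_prop) fun x y => ?_
    by_cases hy : f y = 0
    · have : ENNReal.ofReal ε ≠ 0 := by simpa using h0
      simp [hy, ENNReal.zero_rpow_of_neg hα2, ENNReal.mul_top this]
    have hyp : 0 < f y := lt_of_le_of_ne (hfnn y) (Ne.symm hy)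
    have px : 0 < 1 + (1 - ε) * (‖x‖ ^ 2 / (2 * β)) := by positivity
    have pz : 0 < 1 + r ((1 - ε) • x + ε • y) / β := by
      have a := r2 ((1 - ε) • x + ε • y)
      have : ∀ t, 1 + t / β = (β + t) / β := by intro t; field_simp
      rw [this]; exact div_pos (by nlinarith) hb
    have hyα : 0 < f y ^ (-1 / β) := by positivity
    rw [← hαβ, ofReal_base hb px, ofReal_base hb pz, ENNReal.ofReal_rpow_of_pos hyp, ← ENNReal.ofReal_mul hl.le,
      ← ENNReal.ofReal_mul h0.le, ← ENNReal.ofReal_add (by positivity) (by positivity)]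
    refine ENNReal.ofReal_le_ofReal ?_
    have a1 := r3 ((1 - ε) • x + ε • y) y hy
    rw [add_sub_cancel_right, norm_smul, Real.norm_of_nonneg hl.le] at a1
    have e : (1 - ε) * (1 + (1 - ε) * (‖x‖ ^ 2 / (2 * β))) + ε * f y ^ (-1 / β) =
      1 + (((1 - ε) * ‖x‖) ^ 2 / 2 + ε * (β * (f y ^ (-1 / β) - 1))) / β := by
        generalize f y ^ (-1 / β) = z
        field_simp; ring
    rw [e]
    gcongr
  have hRd : HasDerivWithinAt R (-(1 - n * κ / 2) * I0 ^ κ + If ^ κ) (Set.Ioi 0) 0 := by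
    have d1 : HasDerivAt (fun ε : ℝ => 1 - ε) (-1) 0 := by
      simpa using (hasDerivAt_id (0:ℝ)).const_sub 1
    have d2 := (d1.rpow_const (p := 1 - n * κ / 2) (Or.inl (by norm_num))).mul_const (I0 ^ κ)
    have d3 := d2.add ((hasDerivAt_id (0:ℝ)).mul_const (If ^ κ))
    refine (d3.congr_deriv ?_).hasDerivWithinAt
    simp
  obtain ⟨L, hL1, hL2⟩ := limit_part hκn hI0p I R H1 H2
    (fun ε h0 h1 => by have : 0 < 1 - ε := by linarith
                       simp only [hR]; positivity)
    (by simp [hR]) hRd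
  refine ⟨L, ?_, ?_⟩
  · simp only [widthDiff, hG0]
    exact hL1
  · refine le_trans (le_of_eq ?_) hL2
    congr 1
    rw [Real.div_rpow hf0.le hI0p.le, Real.rpow_sub hI0p, Real.rpow_one]
    have := hκn.ne
    have : 0 < I0 ^ κ := by positivity
    field_simp
    ring
end
end
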